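/- arXiv:2511.19138 — 5 statements merged into one kernel-verified Lean document; each statement's English description precedes it below -/
import Mathlib

section
/- Let k ≥ 0 be an integer and let G' be a graph of genus C(k,2) with a vertex v such that for every integer 1 ≤ l ≤ k-2 one has r_{G'}(l(k+1)·v) ≥ l(l+3)/2. Then for every integer r ≥ 0: if 0 ≤ r ≤ k, then r_{G'}(r(k+1)·v) ≥ r(r+3)/2, and if r ≥ k+1, then r_{G'}(r(k+1)·v) ≥ r(r+3)/2 - (r-k)(r-k+1)/2. -/
open Finset

variable {V : Type*} [Fintype V] [DecidableEq V]

/-- A finite loopless multigraph on vertex type `V`, given by symmetric edge multiplicities. -/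
structure Multigraph (V : Type*) [Fintype V] [DecidableEq V] where
  mult : V → V → ℕ
  symm : ∀ u v, mult u v = mult v u
  loopless : ∀ v, mult v v = 0

namespace Multigraph

def Adj (G : Multigraph V) (u v : V) : Prop := 0 < G.mult u v

/-- A graph is connected. -/
def Connected (G : Multigraph V) : Prop :=
  Nonempty V ∧ ∀ u v : V, Relation.ReflTransGen G.Adj u v

/-- Valence of a vertex. -/
def valence (G : Multigraph V) (v : V) : ℕ := ∑ u, G.mult v u

/-- The Laplacian applied to an integer-valued function on the vertices. -/
def laplacian (G : Multigraph V) (f : V → ℤ) : V → ℤ :=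
  fun w => ∑ u, (G.mult w u : ℤ) * (f w - f u)

/-- Degree of a divisor. -/
def degree (D : V → ℤ) : ℤ := ∑ v, D v

/-- A divisor is effective if all coefficients are nonnegative. -/
def Effective (D : V → ℤ) : Prop := ∀ v, 0 ≤ D v

/-- Linear equivalence of divisors: they differ by a sequence of chip-firing moves,
equivalently by a Laplacian of an integer function. -/
def LinEquiv (G : Multigraph V) (D D' : V → ℤ) : Prop :=
  ∃ f : V → ℤ, D' = D - G.laplacian f

/-- A divisor is winnable if it is linearly equivalent to an effective divisor. -/
def Winnable (G : Multigraph V) (D : V → ℤ) : Prop :=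
  ∃ E : V → ℤ, Effective E ∧ G.LinEquiv D E

/-- The Baker–Norine rank of a divisor: the largest `r` such that `D - E` is winnable for
every effective divisor `E` of degree `r` (the defining set contains all negative integers,
and its supremum is `-1` precisely when `D` itself is not winnable). -/
noncomputable def rank (G : Multigraph V) (D : V → ℤ) : ℤ :=
  sSup {r : ℤ | ∀ E : V → ℤ, Effective E → degree E = r → G.Winnable (fun w => D w - E w)}

/-- The `k`-th gonality of a graph: the smallest degree of a divisor of rank `k`. -/
noncomputable def gonality (G : Multigraph V) (k : ℤ) : ℤ :=
  sInf {d : ℤ | ∃ D : V → ℤ, G.rank D = k ∧ degree D = d}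

/-- A graph is gonality-tight if its second gonality exceeds its first by exactly 1. -/
def GonalityTight (G : Multigraph V) : Prop :=
  G.gonality 2 = G.gonality 1 + 1

/-- A divisor realises the `k`-th gonality if it has rank `k` and degree `gon_k(G)`. -/
def Realises (G : Multigraph V) (k : ℤ) (D : V → ℤ) : Prop :=
  G.rank D = k ∧ degree D = G.gonality k

/-- A divisor is `v`-reduced: nonnegative away from `v`, and set-firing any nonempty set of
vertices not containing `v` creates a negative coefficient inside the set. -/
def Reduced (G : Multigraph V) (v : V) (D : V → ℤ) : Prop :=
  (∀ w, w ≠ v → 0 ≤ D w) ∧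
    ∀ U : Finset V, U.Nonempty → v ∉ U →
      ∃ w ∈ U, D w - ∑ u ∈ Uᶜ, (G.mult w u : ℤ) < 0

/-- The genus (first Betti number) of a graph: `|E| - |V| + 1`. -/
def genus (G : Multigraph V) : ℤ :=
  ((∑ u, ∑ v, G.mult u v : ℕ) : ℤ) / 2 - Fintype.card V + 1

/-- The canonical divisor of a graph. -/
def canonical (G : Multigraph V) : V → ℤ :=
  fun w => (G.valence w : ℤ) - 2

/-- The subgraph induced on a set `S` of vertices (with all edges among `S`). -/
def induce (G : Multigraph V) (S : Finset V) : Multigraph {x // x ∈ S} where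
  mult a b := G.mult a b
  symm a b := G.symm a b
  loopless a := G.loopless a

/-- `G.SeparatedBy u w v` means every path from `w` to `v` passes through `u`. -/
def SeparatedBy (G : Multigraph V) (u w v : V) : Prop :=
  ¬ Relation.ReflTransGen (fun x y => G.Adj x y ∧ x ≠ u ∧ y ≠ u) w v

end Multigraph

/-- Size of the `i`-th level of a quasi-banana graph: level `0` has a single vertex. -/
def qbSize (q : ℕ → ℕ) (i : ℕ) : ℕ := if i = 0 then 1 else q i

/-- `ℓ` is a quasi-banana labelling of `G` exhibiting `G ≅ QB_m(q_1, …, q_m)`: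
`ℓ` is a bijection onto the pairs `(i, j)` with `i ≤ m`, `1 ≤ j ≤ qbSize q i`
(vertex `u_{i,j}` is the vertex labelled `(i,j)`), and the edge multiplicities are:
one edge between distinct vertices of the same level, `(∑_{k=1}^{i} q_k) + 2` edges
between `u_{i,1}` and each `u_{i+1,j}`, and no other edges. -/
def Multigraph.IsQBLabelling (G : Multigraph V) (m : ℕ) (q : ℕ → ℕ) (ℓ : V → ℕ × ℕ) : Prop :=
  (∀ i, 1 ≤ i → i ≤ m → 0 < q i) ∧
  Function.Injective ℓ ∧
  (∀ v : V, (ℓ v).1 ≤ m ∧ 1 ≤ (ℓ v).2 ∧ (ℓ v).2 ≤ qbSize q (ℓ v).1) ∧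
  (∀ i j : ℕ, i ≤ m → 1 ≤ j → j ≤ qbSize q i → ∃ v, ℓ v = (i, j)) ∧
  (∀ v w : V, v ≠ w → G.mult v w =
    if (ℓ v).1 = (ℓ w).1 then 1
    else if (ℓ v).1 + 1 = (ℓ w).1 ∧ (ℓ v).2 = 1 then (∑ i ∈ Finset.Icc 1 (ℓ v).1, q i) + 2
    else if (ℓ w).1 + 1 = (ℓ v).1 ∧ (ℓ w).2 = 1 then (∑ i ∈ Finset.Icc 1 (ℓ w).1, q i) + 2
    else 0)

/-- A graph is a quasi-banana graph if it is isomorphic to some `QB_m(N)`. -/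
def Multigraph.IsQuasiBanana (G : Multigraph V) : Prop :=
  ∃ (m : ℕ) (q : ℕ → ℕ) (ℓ : V → ℕ × ℕ), G.IsQBLabelling m q ℓ

/-- The graph obtained from `G'` by attaching a complete graph `K_n`: `n` new vertices
pairwise joined by exactly one edge, each joined to `v` by exactly `k+1` edges. -/
def attachComplete (G' : Multigraph V) (v : V) (k n : ℕ) : Multigraph (V ⊕ Fin n) where
  mult x y :=
    match x, y with
    | Sum.inl a, Sum.inl b => G'.mult a b
    | Sum.inl a, Sum.inr _ => if a = v then k + 1 else 0
    | Sum.inr _, Sum.inl b => if b = v then k + 1 else 0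
    | Sum.inr i, Sum.inr j => if i = j then 0 else 1
  symm := by
    rintro (a | i) (b | j)
    · exact G'.symm a b
    · rfl
    · rfl
    · by_cases h : i = j
      · simp [h]
      · simp [h, Ne.symm h]
  loopless := by
    rintro (a | i)
    · exact G'.loopless a
    · simp

namespace Multigraph

lemma s13_lap_sub (G : Multigraph V) (f h : V → ℤ) :
    G.laplacian (f - h) = G.laplacian f - G.laplacian h := by
  funext w
  simp only [laplacian, Pi.sub_apply, ← Finset.sum_sub_distrib]
  exact Finset.sum_congr rfl fun u _ => by ring

lemma s13_symm (G : Multigraph V) (f h : V → ℤ) :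
    ∑ w, f w * G.laplacian h w = ∑ w, h w * G.laplacian f w := by
  have key : ∀ a b : V → ℤ, ∑ w, a w * G.laplacian b w =
      (∑ w, ∑ u, (G.mult w u : ℤ) * (a w * b w)) - ∑ w, ∑ u, (G.mult w u : ℤ) * (a w * b u) := by
    intro a b
    simp only [laplacian, Finset.mul_sum, ← Finset.sum_sub_distrib]
    exact Finset.sum_congr rfl fun w _ => Finset.sum_congr rfl fun u _ => by ring
  rw [key, key]
  congr 1
  · exact Finset.sum_congr rfl fun w _ => Finset.sum_congr rfl fun u _ => by ring
  · rw [Finset.sum_comm]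
    exact Finset.sum_congr rfl fun w _ => Finset.sum_congr rfl fun u _ => by
      rw [G.symm u w]; ring

lemma s13_energy (G : Multigraph V) (f : V → ℤ) :
    2 * ∑ w, f w * G.laplacian f w = ∑ w, ∑ u, (G.mult w u : ℤ) * (f w - f u) ^ 2 := by
  have h1 : ∑ w, f w * G.laplacian f w = ∑ w, ∑ u, (G.mult w u : ℤ) * (f w * (f w - f u)) := by
    simp only [laplacian, Finset.mul_sum]
    exact Finset.sum_congr rfl fun w _ => Finset.sum_congr rfl fun u _ => by ring
  have h2 : ∑ w, f w * G.laplacian f w = ∑ w, ∑ u, (G.mult w u : ℤ) * (f u * (f u - f w)) := by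
    rw [h1, Finset.sum_comm]
    exact Finset.sum_congr rfl fun w _ => Finset.sum_congr rfl fun u _ => by
      rw [G.symm u w]
  rw [two_mul]
  nth_rewrite 1 [h1]
  rw [h2]
  simp only [← Finset.sum_add_distrib]
  exact Finset.sum_congr rfl fun w _ => Finset.sum_congr rfl fun u _ => by ring

lemma s13_deg_lap (G : Multigraph V) (f : V → ℤ) : ∑ w, G.laplacian f w = 0 := by
  have h := s13_symm G (fun _ => 1) f
  simp only [one_mul] at h
  rw [h]
  simp [laplacian]

/-- total variation -/
def s13TV (G : Multigraph V) (f : V → ℤ) : ℤ := ∑ w, ∑ u, (G.mult w u : ℤ) * |f w - f u|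

lemma s13_edge (G : Multigraph V) (f : V → ℤ) (a b : V) (h : G.Adj a b) :
    |f a - f b| ≤ G.s13TV f := by
  have hm : (1 : ℤ) ≤ G.mult a b := by exact_mod_cast h
  calc |f a - f b| ≤ (G.mult a b : ℤ) * |f a - f b| := by nlinarith [abs_nonneg (f a - f b)]
    _ ≤ ∑ u, (G.mult a u : ℤ) * |f a - f u| :=
      Finset.single_le_sum (f := fun u => (G.mult a u : ℤ) * |f a - f u|)
        (fun u _ => by positivity) (Finset.mem_univ b)
    _ ≤ _ := Finset.single_le_sum (f := fun w => ∑ u, (G.mult w u : ℤ) * |f w - f u|)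
        (fun u _ => by positivity) (Finset.mem_univ a)

lemma s13_path (G : Multigraph V) (a b : V) (h : Relation.ReflTransGen G.Adj a b) :
    ∃ N : ℤ, ∀ f : V → ℤ, |f b - f a| ≤ N * G.s13TV f := by
  induction h with
  | refl => exact ⟨0, fun f => by simp⟩
  | @tail b c _ hbc ih =>
    obtain ⟨N, hN⟩ := ih
    refine ⟨N + 1, fun f => ?_⟩
    have h1 := hN f
    have h2 := G.s13_edge f b c hbc
    have h3 := abs_sub_le (f c) (f b) (f a)
    rw [abs_sub_comm (f c) (f b)] at h3
    linarith

lemma s13_lin_bound (G : Multigraph V) (hG : G.Connected) (c : V → ℤ) (hc : ∑ w, c w = 0) :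
    ∃ N : ℤ, ∀ f : V → ℤ, ∑ w, c w * f w ≤ N * G.s13TV f := by
  obtain ⟨⟨a⟩, hcon⟩ := hG
  choose N hN using fun w => G.s13_path a w (hcon a w)
  refine ⟨∑ w, |c w| * N w, fun f => ?_⟩
  have h0 : ∑ w, c w * f w = ∑ w, c w * (f w - f a) := by
    simp only [mul_sub, Finset.sum_sub_distrib, ← Finset.sum_mul, hc]; simp
  rw [h0, Finset.sum_mul]
  refine Finset.sum_le_sum fun w _ => ?_
  calc c w * (f w - f a) ≤ |c w * (f w - f a)| := le_abs_self _
    _ = |c w| * |f w - f a| := abs_mul _ _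
    _ ≤ |c w| * (N w * G.s13TV f) := mul_le_mul_of_nonneg_left (hN w f) (abs_nonneg _)
    _ = _ := by ring

lemma s13_bounded (G : Multigraph V) (hG : G.Connected) (c : V → ℤ) (hc : ∑ w, c w = 0)
    (n : ℤ) (hn : 1 ≤ n) :
    ∃ B : ℤ, ∀ f : V → ℤ, B ≤ n * (∑ w, f w * G.laplacian f w) - ∑ w, c w * f w := by
  obtain ⟨N, hN⟩ := G.s13_lin_bound hG c hc
  refine ⟨- ∑ w, ∑ u, (G.mult w u : ℤ) * N ^ 2, fun f => ?_⟩
  have h1 := G.s13_energy f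
  have h2 := hN f
  have h3 : 0 ≤ ∑ w, ∑ u, (G.mult w u : ℤ) * (f w - f u) ^ 2 := by positivity
  have h4 : 2 * (N * G.s13TV f) ≤ (∑ w, ∑ u, (G.mult w u : ℤ) * (f w - f u) ^ 2)
      + ∑ w, ∑ u, (G.mult w u : ℤ) * N ^ 2 := by
    simp only [s13TV, Finset.mul_sum, ← Finset.sum_add_distrib]
    refine Finset.sum_le_sum fun w _ => Finset.sum_le_sum fun u _ => ?_
    have hm : (0 : ℤ) ≤ G.mult w u := by positivity
    have hs : 0 ≤ (|f w - f u| - N) ^ 2 := sq_nonneg _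
    have ha := sq_abs (f w - f u)
    nlinarith [mul_nonneg hm hs]
  have h6 : 0 ≤ ∑ w, ∑ u, (G.mult w u : ℤ) * N ^ 2 := by positivity
  nlinarith

lemma s13_exists_min {α : Type*} [Nonempty α] (P : α → ℤ) (B : ℤ) (h : ∀ a, B ≤ P a) :
    ∃ a, ∀ b, P a ≤ P b := by
  obtain ⟨a, ha⟩ := exists_minimal_of_wellFoundedLT (fun m : ℕ => ∃ a, P a = B + m)
    ⟨(P (Classical.arbitrary α) - B).toNat, Classical.arbitrary α, by
      have := h (Classical.arbitrary α); omega⟩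
  obtain ⟨⟨x, hx⟩, hmin⟩ := ha
  refine ⟨x, fun b => ?_⟩
  by_contra hlt
  have hb := h b
  have := hmin (y := (P b - B).toNat) ⟨b, by omega⟩ (by omega)
  omega

lemma s13_winnable (G : Multigraph V) (hG : G.Connected) (D : V → ℤ)
    (hD : G.genus ≤ degree D) : G.Winnable D := by
  obtain ⟨a⟩ := hG.1
  have : Nonempty V := ⟨a⟩
  set n : ℤ := ((Fintype.card V : ℕ) : ℤ) with hn
  have hn1 : 1 ≤ n := by
    have : 0 < Fintype.card V := Fintype.card_pos
    omega
  set S : ℤ := ((∑ u, ∑ v, G.mult u v : ℕ) : ℤ) with hS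
  have hS' : S = ∑ w, (G.valence w : ℤ) := by
    simp [hS, valence]
  set e : ℤ := 2 * degree D - S + 2 * n with he
  have he1 : 1 ≤ e := by
    unfold genus at hD
    rw [← hS, ← hn] at hD
    omega
  let c : V → ℤ := fun w => 2 * n * D w - n * G.valence w + 2 * n - e
  have hc : ∑ w, c w = 0 := by
    simp only [c, Finset.sum_sub_distrib, Finset.sum_add_distrib, ← Finset.mul_sum, ← hS',
      Finset.sum_const, Finset.card_univ, nsmul_eq_mul, ← hn]
    rw [he, degree]
    ring
  obtain ⟨B, hB⟩ := G.s13_bounded hG c hc n hn1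
  obtain ⟨f, hf⟩ := s13_exists_min _ B hB
  refine ⟨D - G.laplacian f, fun w => ?_, f, rfl⟩
  have h := hf (f - Pi.single w 1)
  have hl : ∑ x, (Pi.single w 1 : V → ℤ) x * G.laplacian f x = G.laplacian f w := by
    simp [Pi.single_apply]
  have hl2 : ∑ x, f x * G.laplacian (Pi.single w 1) x = G.laplacian f w := by
    rw [s13_symm, hl]
  have hv : ∑ x, (Pi.single w 1 : V → ℤ) x * G.laplacian (Pi.single w 1) x = G.valence w := by
    have : ∑ x, (Pi.single w 1 : V → ℤ) x * G.laplacian (Pi.single w 1) x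
        = G.laplacian (Pi.single w 1) w := by
      simp [Pi.single_apply]
    rw [this]
    simp only [laplacian, valence, Nat.cast_sum]
    refine Finset.sum_congr rfl fun u _ => ?_
    by_cases hu : u = w
    · subst hu; simp [G.loopless]
    · simp [hu]
  have hcc : ∑ x, c x * (Pi.single w 1 : V → ℤ) x = c w := by
    simp [Pi.single_apply]
  rw [s13_lap_sub] at h
  simp only [Pi.sub_apply, sub_mul, mul_sub, Finset.sum_sub_distrib, hl, hl2, hv, hcc] at h
  simp only [c] at h
  simp only [Pi.sub_apply]
  by_contra hneg
  push Not at hneg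
  nlinarith

lemma s13_bdd (G : Multigraph V) (a : V) (D : V → ℤ) :
    BddAbove {r : ℤ | ∀ E : V → ℤ, Effective E → degree E = r →
      G.Winnable (fun w => D w - E w)} := by
  refine ⟨max 0 (degree D), fun r hr => ?_⟩
  by_contra hlt
  push Not at hlt
  have h0 : 0 < r := lt_of_le_of_lt (le_max_left _ _) hlt
  have h1 : degree D < r := lt_of_le_of_lt (le_max_right _ _) hlt
  have hd : ∑ w, (Pi.single a r : V → ℤ) w = r := by simp
  obtain ⟨F, hF, f, hf⟩ := hr (Pi.single a r)
    (fun w => by by_cases hw : w = a <;> simp [Pi.single_apply, hw, h0.le]) hd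
  have hs : 0 ≤ ∑ w, F w := Finset.sum_nonneg fun w _ => hF w
  rw [hf] at hs
  simp only [Pi.sub_apply, Finset.sum_sub_distrib, hd, s13_deg_lap] at hs
  unfold degree at h1
  linarith

lemma s13_le_rank (G : Multigraph V) (a : V) (D : V → ℤ) (s : ℤ)
    (h : ∀ E : V → ℤ, Effective E → degree E = s → G.Winnable (fun w => D w - E w)) :
    s ≤ G.rank D :=
  le_csSup (G.s13_bdd a D) h

lemma s13_riemann (G : Multigraph V) (hG : G.Connected) (a : V) (D : V → ℤ) :
    degree D - G.genus ≤ G.rank D := by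
  refine G.s13_le_rank a D _ fun E _ hE => G.s13_winnable hG _ ?_
  have : degree (fun w => D w - E w) = degree D - degree E := by
    simp [degree, Finset.sum_sub_distrib]
  rw [this, hE]
  linarith

end Multigraph

/-- With `G'` of genus `C(k,2)` satisfying the rank hypothesis at `v`,
for every `r ≥ 0`: `r(r(k+1)·v) ≥ r(r+3)/2` if `r ≤ k`, and
`r(r(k+1)·v) ≥ r(r+3)/2 - (r-k)(r-k+1)/2` if `r ≥ k+1`. -/
theorem stmt13 (G' : Multigraph V) (hG' : G'.Connected)
    (k : ℕ) (hgenus : G'.genus = (Nat.choose k 2 : ℤ)) (v : V)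
    (hrank : ∀ l : ℤ, 1 ≤ l → l ≤ (k : ℤ) - 2 →
      l * (l + 3) ≤ 2 * G'.rank (fun w => if w = v then l * ((k : ℤ) + 1) else 0)) :
    ∀ r : ℤ, 0 ≤ r →
      (r ≤ (k : ℤ) →
        r * (r + 3) ≤ 2 * G'.rank (fun w => if w = v then r * ((k : ℤ) + 1) else 0)) ∧
      ((k : ℤ) + 1 ≤ r →
        r * (r + 3) - (r - (k : ℤ)) * (r - (k : ℤ) + 1) ≤
          2 * G'.rank (fun w => if w = v then r * ((k : ℤ) + 1) else 0)) := by
  intro r hr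
  have hR := G'.s13_riemann hG' v (fun w => if w = v then r * ((k : ℤ) + 1) else 0)
  have hdeg : Multigraph.degree (fun w => if w = v then r * ((k : ℤ) + 1) else 0)
      = r * ((k : ℤ) + 1) := by
    simp [Multigraph.degree]
  have hch : 2 * (Nat.choose k 2 : ℤ) = k * ((k : ℤ) - 1) := by
    have h := Nat.triangle_succ (k - 1)
    rw [Nat.choose_two_right]
    have h2 : 2 * (k * (k - 1) / 2) = k * (k - 1) :=
      Nat.mul_div_cancel' (Nat.even_mul_pred_self k).two_dvd
    rcases k with _ | k
    · simp
    · have h3 : ((2 * ((k + 1) * (k + 1 - 1) / 2) : ℕ) : ℤ) = ((k + 1) * (k + 1 - 1) : ℕ) := by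
        exact_mod_cast h2
      push_cast [Nat.add_sub_cancel] at h3 ⊢
      linarith
  rw [hdeg, hgenus] at hR
  refine ⟨fun hrk => ?_, fun _ => by nlinarith⟩
  rcases hr.eq_or_lt with h0 | h0
  · subst h0
    have : (0 : ℤ) ≤ G'.rank (fun w => if w = v then 0 * ((k : ℤ) + 1) else 0) := by
      refine G'.s13_le_rank v _ _ fun E hE hE0 => ?_
      have hz : ∀ w, E w = 0 := fun w =>
        (Finset.sum_eq_zero_iff_of_nonneg (fun x _ => hE x)).1 hE0 w (Finset.mem_univ w)
      exact ⟨fun _ => 0, fun _ => le_refl _, fun _ => 0, by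
        funext w; simp [hz, Multigraph.laplacian]⟩
    linarith
  · by_cases h2 : r ≤ (k : ℤ) - 2
    · exact hrank r (by omega) h2
    · have h3 : r = k ∨ r = (k : ℤ) - 1 := by omega
      have h4 : (r - (k : ℤ)) * (r - (k : ℤ) + 1) = 0 := by
        rcases h3 with h | h <;> rw [h] <;> ring
      nlinarith
end

section
/- Let k ≥ 1 be an integer and let G' be a graph of genus C(k,2) with a vertex v such that: for every integer 1 ≤ l ≤ k-2, gon_{l(l+1)/2}(G') ≥ lk, and for every integer r ≥ 1 the divisor gon_r(G')·v realises the r-th gonality of G'. Let n ≥ 1 and let G be the graph obtained from G' by attaching a complete graph K_n: add n new vertices pairwise joined by exactly one edge, and join v to each of the n new vertices by exactly k+1 edges. Then for every integer 1 ≤ l ≤ k+n-2, gon_{l(l+1)/2}(G) ≥ l(k+n). -/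
open Finset

variable {V : Type*} [Fintype V] [DecidableEq V]

namespace Stmt14

lemma tri_le (S : Finset ℕ) :
    2 * ∑ i ∈ S, ((S.filter (fun h => h ≤ i)).card : ℤ) = S.card * (S.card + 1) := by
  induction S using Finset.induction_on_max with
  | empty => simp
  | insert a s ha ih =>
    have hna : a ∉ s := fun h => lt_irrefl _ (ha a h)
    rw [Finset.sum_insert hna, Finset.card_insert_of_notMem hna]
    have e1 : (insert a s).filter (fun h => h ≤ a) = insert a s := by
      apply Finset.filter_true_of_mem
      intro x hx
      rcases Finset.mem_insert.1 hx with rfl | hx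
      · exact le_rfl
      · exact (ha x hx).le
    have e2 : ∀ i ∈ s, (((insert a s).filter (fun h => h ≤ i)).card : ℤ)
        = ((s.filter (fun h => h ≤ i)).card : ℤ) := by
      intro i hi
      rw [Finset.filter_insert, if_neg (not_le.2 (ha i hi))]
    rw [e1, Finset.sum_congr rfl e2, Finset.card_insert_of_notMem hna]
    push_cast
    linarith

lemma tri_ge (S : Finset ℕ) :
    2 * ∑ i ∈ S, ((S.filter (fun h => i ≤ h)).card : ℤ) = S.card * (S.card + 1) := by
  induction S using Finset.induction_on_min with
  | empty => simp
  | insert a s ha ih =>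
    have hna : a ∉ s := fun h => lt_irrefl _ (ha a h)
    rw [Finset.sum_insert hna, Finset.card_insert_of_notMem hna]
    have e1 : (insert a s).filter (fun h => a ≤ h) = insert a s := by
      apply Finset.filter_true_of_mem
      intro x hx
      rcases Finset.mem_insert.1 hx with rfl | hx
      · exact le_rfl
      · exact (ha x hx).le
    have e2 : ∀ i ∈ s, (((insert a s).filter (fun h => i ≤ h)).card : ℤ)
        = ((s.filter (fun h => i ≤ h)).card : ℤ) := by
      intro i hi
      rw [Finset.filter_insert, if_neg (not_le.2 (ha i hi))]
    rw [e1, Finset.sum_congr rfl e2, Finset.card_insert_of_notMem hna]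
    push_cast
    linarith

lemma sum_lower (S : Finset ℕ) (t : ℕ) (ht : ∀ i ∈ S, t ≤ i) :
    (S.card : ℤ) * (S.card - 1) ≤ 2 * ∑ i ∈ S, ((i : ℤ) - t) := by
  induction S using Finset.induction_on_max with
  | empty => simp
  | insert a s ha ih =>
    have hna : a ∉ s := fun h => lt_irrefl _ (ha a h)
    rw [Finset.sum_insert hna, Finset.card_insert_of_notMem hna]
    have := ih (fun i hi => ht i (Finset.mem_insert_of_mem hi))
    have hta := ht a (Finset.mem_insert_self _ _)
    have hc : s.card ≤ (Finset.Ico t a).card := Finset.card_le_card (by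
      intro i hi
      exact Finset.mem_Ico.2 ⟨ht i (Finset.mem_insert_of_mem hi), ha i hi⟩)
    rw [Nat.card_Ico] at hc
    have : (s.card : ℤ) ≤ a - t := by omega
    push_cast
    linarith

lemma sum_upper (S : Finset ℕ) (t : ℕ) (ht : ∀ i ∈ S, i ≤ t) :
    (S.card : ℤ) * (S.card - 1) ≤ 2 * ∑ i ∈ S, ((t : ℤ) - i) := by
  induction S using Finset.induction_on_min with
  | empty => simp
  | insert a s ha ih =>
    have hna : a ∉ s := fun h => lt_irrefl _ (ha a h)
    rw [Finset.sum_insert hna, Finset.card_insert_of_notMem hna]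
    have := ih (fun i hi => ht i (Finset.mem_insert_of_mem hi))
    have hta := ht a (Finset.mem_insert_self _ _)
    have hc : s.card ≤ (Finset.Ioc a t).card := Finset.card_le_card (by
      intro i hi
      exact Finset.mem_Ioc.2 ⟨ha i hi, ht i (Finset.mem_insert_of_mem hi)⟩)
    rw [Nat.card_Ioc] at hc
    have : (s.card : ℤ) ≤ t - a := by omega
    push_cast
    linarith

/-- Numerical contradiction, no overflow columns. -/
lemma num_a (R ρ y A B : ℤ) (hR : 0 ≤ R) (hρ : 1 ≤ ρ) (hy : 0 ≤ y) (hA : 0 ≤ A) (hB : 0 ≤ B)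
    (hAB : 1 ≤ R → 3 ≤ A + B)
    (h1 : 2 * (R * A) + R * (R - 1) + 2 ≤ ρ * (ρ + 1))
    (h2 : 2 * (ρ * B) + ρ * (ρ - 1) + 2 * (y * (ρ + B)) + 2 ≤ 2 * (y * (1 + R)) + R * (R + 1)) :
    False := by
  have hRA : 0 ≤ R * A := mul_nonneg hR hA
  have hρB : 0 ≤ ρ * B := mul_nonneg (by linarith) hB
  rcases lt_trichotomy ρ R with h | h | h
  · nlinarith
  · subst h
    have hA0 : A = 0 := by
      by_contra hne
      have : 1 ≤ A := by omega
      nlinarith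
    have hB3 : 3 ≤ B := by have := hAB hρ; omega
    nlinarith [mul_nonneg hy (by linarith : 0 ≤ B - 3), mul_nonneg (by linarith : 0 ≤ ρ) (by linarith : 0 ≤ B - 3)]
  · have hyB : 0 ≤ y * B := mul_nonneg hy hB
    nlinarith [mul_nonneg hy (by linarith : 0 ≤ ρ - R - 1)]

lemma num_b (R ρ y A B κ : ℤ) (hR : 0 ≤ R) (hρ : 1 ≤ ρ) (hy : 0 ≤ y) (hA : 0 ≤ A) (hκ : 0 ≤ κ)
    (hB : κ + 3 ≤ B)
    (h1 : 2 * (R * A) + R * (R - 1) + 2 ≤ ρ * (ρ + 1))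
    (h2 : 2 * (ρ * B) + ρ * (ρ - 1) + 2 * (y * (ρ + B)) + 2
      ≤ 2 * (y * (1 + R + κ)) + R * (R + 1) + 2 * (κ * R)) :
    False := by
  have hRA : 0 ≤ R * A := mul_nonneg hR hA
  have hρR : R ≤ ρ := by
    by_contra h
    nlinarith
  nlinarith [mul_nonneg hy (by linarith : 0 ≤ B - (κ + 3)), mul_nonneg hy (by linarith : 0 ≤ ρ - R),
    mul_nonneg (by linarith : 0 ≤ ρ) (by linarith : 0 ≤ B - (κ + 3)),
    mul_nonneg hκ (by linarith : 0 ≤ ρ - R)]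

lemma num_c (R ρ y A B κ : ℤ) (hR : 0 ≤ R) (hρ : 1 ≤ ρ) (hy : 0 ≤ y) (hB : 0 ≤ B) (hκ : 0 ≤ κ)
    (hA : 1 ≤ R → κ + 3 ≤ A)
    (h1 : 2 * (R * A) + R * (R - 1) + 2 ≤ ρ * (ρ + 1) + 2 * (κ * ρ))
    (h2 : 2 * (ρ * B) + ρ * (ρ - 1) + 2 * (y * (ρ + B)) + 2
      ≤ 2 * (y * (1 + R)) + R * (R + 1)) :
    False := by
  have hρB : 0 ≤ ρ * B := mul_nonneg (by linarith) hB
  have hyB : 0 ≤ y * B := mul_nonneg hy hB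
  have hρR : R + 1 ≤ ρ := by
    by_contra h
    have h3 := hA (by linarith)
    nlinarith [mul_nonneg hR (by linarith : 0 ≤ A - (κ + 3)), mul_nonneg hκ (by linarith : 0 ≤ R - ρ)]
  nlinarith [mul_nonneg hy (by linarith : 0 ≤ ρ - R - 1)]

lemma core_pos (n k : ℕ) (hk : 1 ≤ k) (L : ℤ) (α : ℕ → ℤ)
    (mono : ∀ i j, i ≤ j → j ≤ n → α i ≤ α j) (per : α n = α 0 + n + k + 1) (h0 : α 0 ≤ 0) :
    (∑ i ∈ range n, max (α (i + 1) - max L ((i : ℤ) + 1 + k + 1)) 0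
      ≤ ∑ i ∈ range n, max (L - max (α (i + 1)) ((i : ℤ) + 1)) 0) ∨
    (∑ i ∈ range n, max (min (i : ℤ) L - α i) 0
      ≤ ∑ i ∈ range n, max (min (α i) ((i : ℤ) + k + 1) - L) 0) := by
  by_contra hcon
  push Not at hcon
  obtain ⟨hX, hY⟩ := hcon
  obtain ⟨y, hy⟩ : ∃ y : ℕ, α 0 = -(y : ℤ) := ⟨(-α 0).toNat, by omega⟩
  set RY := (range n).filter (fun i : ℕ => 1 ≤ i ∧ (i : ℤ) ≤ L ∧ α i < i) with hRY
  set KY := (range n).filter (fun i : ℕ => 1 ≤ i ∧ L < (i : ℤ) ∧ α i < L) with hKY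
  set RX := (range n).filter (fun i : ℕ => L ≤ (i : ℤ) + k + 1 ∧ (i : ℤ) + k + 1 < α i) with hRX
  set KX := (range n).filter (fun i : ℕ => (i : ℤ) + k + 1 < L ∧ L < α i) with hKX
  have mRY : ∀ i : ℕ, i ∈ RY ↔ i < n ∧ 1 ≤ i ∧ (i : ℤ) ≤ L ∧ α i < i := by
    intro i; simp [hRY]
  have mKY : ∀ i : ℕ, i ∈ KY ↔ i < n ∧ 1 ≤ i ∧ L < (i : ℤ) ∧ α i < L := by
    intro i; simp [hKY]
  have mRX : ∀ i : ℕ, i ∈ RX ↔ i < n ∧ L ≤ (i : ℤ) + k + 1 ∧ (i : ℤ) + k + 1 < α i := by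
    intro i; simp [hRX]
  have mKX : ∀ i : ℕ, i ∈ KX ↔ i < n ∧ (i : ℤ) + k + 1 < L ∧ L < α i := by
    intro i; simp [hKX]
  have hge : ∀ i, i ≤ n → -(y : ℤ) ≤ α i := fun i hi => by
    have := mono 0 i (Nat.zero_le _) hi; omega
  have hle : ∀ i, i ≤ n → α i ≤ n + k + 1 - y := fun i hi => by
    have := mono i n hi le_rfl; omega
  -- bound on Y
  have bY : ∑ i ∈ range n, max (min (i : ℤ) L - α i) 0
      ≤ y + (∑ i ∈ RY, ((y : ℤ) + ((RY.filter (fun h => h ≤ i)).card : ℤ)))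
        + ∑ i ∈ KY, ((y : ℤ) + RY.card) := by
    have hpt : ∀ i ∈ range n, max (min (i : ℤ) L - α i) 0 ≤ (if i = 0 then (y : ℤ) else 0)
        + (if i ∈ RY then ((y : ℤ) + ((RY.filter (fun h => h ≤ i)).card : ℤ)) else 0)
        + (if i ∈ KY then ((y : ℤ) + RY.card) else 0) := by
      intro i hi
      have hin : i < n := Finset.mem_range.1 hi
      have hgi := hge i hin.le
      by_cases hi0 : i = 0
      · subst hi0
        have a1 : 0 ∉ RY := by rw [mRY]; omega
        have a2 : 0 ∉ KY := by rw [mKY]; omega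
        simp only [a1, a2, if_true, if_false]
        push_cast
        omega
      · by_cases h1 : i ∈ RY
        · have h1' := (mRY i).1 h1
          have a2 : i ∉ KY := by rw [mKY]; omega
          simp only [h1, a2, hi0, if_true, if_false]
          have hc : (Finset.Ioc (α i).toNat i).card ≤ (RY.filter (fun h => h ≤ i)).card := by
            apply Finset.card_le_card
            intro h hh
            rw [Finset.mem_Ioc] at hh
            have := mono h i hh.2 hin.le
            rw [Finset.mem_filter, mRY]
            omega
          rw [Nat.card_Ioc] at hc
          omega
        · by_cases h2 : i ∈ KY
          · have h2' := (mKY i).1 h2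
            simp only [h1, h2, hi0, if_true, if_false]
            have hc : (Finset.Ioc (α i).toNat L.toNat).card ≤ RY.card := by
              apply Finset.card_le_card
              intro h hh
              rw [Finset.mem_Ioc] at hh
              have := mono h i (by omega) hin.le
              rw [mRY]
              omega
            rw [Nat.card_Ioc] at hc
            omega
          · simp only [h1, h2, hi0, if_false]
            rw [mRY] at h1
            rw [mKY] at h2
            omega
    refine (Finset.sum_le_sum hpt).trans ?_
    rw [Finset.sum_add_distrib, Finset.sum_add_distrib]
    gcongr
    · rw [Finset.sum_ite_eq']
      split_ifs <;> omega
    · rw [← Finset.sum_filter]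
      apply le_of_eq
      apply Finset.sum_congr _ (fun _ _ => rfl)
      ext i; simp only [Finset.mem_filter, Finset.mem_range, mRY]; tauto
    · rw [← Finset.sum_filter]
      apply le_of_eq
      apply Finset.sum_congr _ (fun _ _ => rfl)
      ext i; simp only [Finset.mem_filter, Finset.mem_range, mKY]; tauto
  -- bound on X
  have bX : ∑ i ∈ range n, max (α (i + 1) - max L ((i : ℤ) + 1 + k + 1)) 0
      ≤ (∑ i ∈ RX, ((RX.filter (fun h => i ≤ h)).card : ℤ)) + ∑ i ∈ KX, (RX.card : ℤ) := by
    have hsh : ∑ i ∈ range n, max (α (i + 1) - max L ((i : ℤ) + 1 + k + 1)) 0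
        ≤ ∑ i ∈ range n, max (α i - max L ((i : ℤ) + k + 1)) 0 := by
      have e1 := Finset.sum_range_succ (fun i : ℕ => max (α i - max L ((i : ℤ) + k + 1)) 0) n
      have e2 := Finset.sum_range_succ' (fun i : ℕ => max (α i - max L ((i : ℤ) + k + 1)) 0) n
      push_cast at e1 e2
      have hn := hle n le_rfl
      have : max (α n - max L ((n : ℤ) + k + 1)) 0 = 0 := by omega
      have : 0 ≤ max (α 0 - max L (0 + (k : ℤ) + 1)) 0 := le_max_right _ _
      linarith
    refine hsh.trans ?_
    have hpt : ∀ i ∈ range n, max (α i - max L ((i : ℤ) + k + 1)) 0 ≤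
        (if i ∈ RX then ((RX.filter (fun h => i ≤ h)).card : ℤ) else 0)
        + (if i ∈ KX then (RX.card : ℤ) else 0) := by
      intro i hi
      have hin : i < n := Finset.mem_range.1 hi
      have hgi := hle i hin.le
      by_cases h1 : i ∈ RX
      · have h1' := (mRX i).1 h1
        have a2 : i ∉ KX := by rw [mKX]; omega
        simp only [h1, a2, if_true, if_false]
        have hc : (Finset.Ico i (α i - k - 1).toNat).card
            ≤ (RX.filter (fun h => i ≤ h)).card := by
          apply Finset.card_le_card
          intro h hh
          rw [Finset.mem_Ico] at hh
          have := mono i h hh.1 (by omega)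
          rw [Finset.mem_filter, mRX]
          omega
        rw [Nat.card_Ico] at hc
        omega
      · by_cases h2 : i ∈ KX
        · have h2' := (mKX i).1 h2
          simp only [h1, h2, if_true, if_false]
          have hc : (Finset.Ico (L - k - 1).toNat (α i - k - 1).toNat).card ≤ RX.card := by
            apply Finset.card_le_card
            intro h hh
            rw [Finset.mem_Ico] at hh
            have := mono i h (by omega) (by omega)
            rw [mRX]
            omega
          rw [Nat.card_Ico] at hc
          omega
        · simp only [h1, h2, if_false]
          rw [mRX] at h1
          rw [mKX] at h2
          omega
    refine (Finset.sum_le_sum hpt).trans ?_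
    rw [Finset.sum_add_distrib]
    gcongr
    · rw [← Finset.sum_filter]
      apply le_of_eq
      apply Finset.sum_congr _ (fun _ _ => rfl)
      ext i; simp only [Finset.mem_filter, Finset.mem_range, mRX]; tauto
    · rw [← Finset.sum_filter]
      apply le_of_eq
      apply Finset.sum_congr _ (fun _ _ => rfl)
      ext i; simp only [Finset.mem_filter, Finset.mem_range, mKX]; tauto
  -- bound on Z1
  have bZ1 : ∑ i ∈ RY, (L - (i : ℤ)) ≤ ∑ i ∈ range n, max (L - max (α (i + 1)) ((i : ℤ) + 1)) 0 := by
    have e1 : ∑ i ∈ range n, max (L - max (α (i + 1)) ((i : ℤ) + 1)) 0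
        = ∑ i ∈ Finset.Ico 1 (n + 1), max (L - max (α i) (i : ℤ)) 0 := by
      rw [Finset.sum_Ico_eq_sum_range]
      apply Finset.sum_congr rfl
      intro i _
      rw [add_comm 1 i]
      push_cast
      rfl
    rw [e1]
    calc ∑ i ∈ RY, (L - (i : ℤ)) ≤ ∑ i ∈ RY, max (L - max (α i) (i : ℤ)) 0 := by
          apply Finset.sum_le_sum
          intro i hi
          rw [mRY] at hi
          omega
      _ ≤ _ := by
          apply Finset.sum_le_sum_of_subset_of_nonneg
          · intro i hi
            rw [mRY] at hi
            rw [Finset.mem_Ico]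
            omega
          · intro i _ _
            exact le_max_right _ _
  have Z1nn : 0 ≤ ∑ i ∈ range n, max (L - max (α (i + 1)) ((i : ℤ) + 1)) 0 :=
    Finset.sum_nonneg (fun i _ => le_max_right _ _)
  have hRXne : RX.Nonempty := by
    by_contra hne
    rw [Finset.not_nonempty_iff_eq_empty] at hne
    rw [hne] at bX
    simp at bX
    linarith
  set g := RX.max' hRXne with hg
  set t := RX.min' hRXne with ht
  have hgm : g ∈ RX := Finset.max'_mem _ _
  have htm : t ∈ RX := Finset.min'_mem _ _
  have hgmax : ∀ i ∈ RX, i ≤ g := fun i hi => Finset.le_max' _ _ hi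
  have htmin : ∀ i ∈ RX, t ≤ i := fun i hi => Finset.min'_le _ _ hi
  have hρ1 : 1 ≤ RX.card := hRXne.card_pos
  have hgn := (mRX g).1 hgm
  have htn := (mRX t).1 htm
  have hgy : (g : ℤ) < n - y := by have := hle g hgn.1.le; omega
  have hgt : (RX.card : ℤ) ≤ g - t + 1 := by
    have hc : RX.card ≤ (Finset.Icc t g).card := Finset.card_le_card (fun i hi =>
      Finset.mem_Icc.2 ⟨htmin i hi, hgmax i hi⟩)
    rw [Nat.card_Icc] at hc
    have := htmin g hgm
    omega
  -- bound on Z2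
  have bZ2 : (∑ i ∈ RX, ((i : ℤ) + k + 1 - L)) + y * ((g : ℤ) + k + 2 - L)
      ≤ ∑ i ∈ range n, max (min (α i) ((i : ℤ) + k + 1) - L) 0 := by
    have hdis : Disjoint RX (Finset.Ico (n - y) n) := by
      rw [Finset.disjoint_left]
      intro i hi hi2
      rw [Finset.mem_Ico] at hi2
      have := hgmax i hi
      omega
    calc (∑ i ∈ RX, ((i : ℤ) + k + 1 - L)) + y * ((g : ℤ) + k + 2 - L)
        = (∑ i ∈ RX, ((i : ℤ) + k + 1 - L))
          + ∑ i ∈ Finset.Ico (n - y) n, ((g : ℤ) + k + 2 - L) := by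
          rw [Finset.sum_const, Nat.card_Ico, nsmul_eq_mul]
          congr 2
          omega
      _ ≤ (∑ i ∈ RX, max (min (α i) ((i : ℤ) + k + 1) - L) 0)
          + ∑ i ∈ Finset.Ico (n - y) n, max (min (α i) ((i : ℤ) + k + 1) - L) 0 := by
          apply add_le_add
          · apply Finset.sum_le_sum
            intro i hi
            rw [mRX] at hi
            omega
          · apply Finset.sum_le_sum
            intro i hi
            rw [Finset.mem_Ico] at hi
            have := mono g i (by omega) (by omega)
            omega
      _ = ∑ i ∈ RX ∪ Finset.Ico (n - y) n, max (min (α i) ((i : ℤ) + k + 1) - L) 0 :=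
          (Finset.sum_union hdis).symm
      _ ≤ _ := by
          apply Finset.sum_le_sum_of_subset_of_nonneg
          · intro i hi
            rw [Finset.mem_union, Finset.mem_Ico, mRX] at hi
            rw [Finset.mem_range]
            omega
          · intro i _ _
            exact le_max_right _ _
  -- numerics
  have tY := tri_le RY
  have tX := tri_ge RX
  have lX := sum_lower RX t htmin
  rw [Finset.sum_add_distrib, Finset.sum_const, Finset.sum_const, nsmul_eq_mul, nsmul_eq_mul] at bY
  rw [Finset.sum_const, nsmul_eq_mul] at bX
  have sX : ∑ i ∈ RX, ((i : ℤ) + k + 1 - L)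
      = ∑ i ∈ RX, ((i : ℤ) - t) + RX.card * ((t : ℤ) + k + 1 - L) := by
    rw [← nsmul_eq_mul, ← Finset.sum_const, ← Finset.sum_add_distrib]
    apply Finset.sum_congr rfl
    intros; ring
  rw [sX] at bZ2
  obtain ⟨s, hsmax, hs0⟩ : ∃ s : ℕ, (∀ i ∈ RY, i ≤ s) ∧ (1 ≤ RY.card → s ∈ RY) := by
    by_cases hne : RY.Nonempty
    · exact ⟨RY.max' hne, fun i hi => Finset.le_max' _ _ hi, fun _ => Finset.max'_mem _ _⟩
    · rw [Finset.not_nonempty_iff_eq_empty] at hne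
      exact ⟨0, by simp [hne], by simp [hne]⟩
  have lY := sum_upper RY s hsmax
  have sY : ∑ i ∈ RY, (L - (i : ℤ)) = ∑ i ∈ RY, ((s : ℤ) - i) + RY.card * (L - s) := by
    rw [← nsmul_eq_mul, ← Finset.sum_const, ← Finset.sum_add_distrib]
    apply Finset.sum_congr rfl
    intros; ring
  rw [sY] at bZ1
  -- A is replaced by `L - s` if `RY` is nonempty and by `0` otherwise
  obtain ⟨A, hA, hRA⟩ : ∃ A : ℤ, (1 ≤ RY.card → A = L - s) ∧ 0 ≤ A := by
    by_cases h : 1 ≤ RY.card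
    · have := (mRY s).1 (hs0 h)
      exact ⟨L - s, fun _ => rfl, by omega⟩
    · exact ⟨0, fun h' => absurd h' h, le_rfl⟩
  have hRAe : (RY.card : ℤ) * (L - s) = RY.card * A := by
    by_cases h : 1 ≤ RY.card
    · rw [hA h]
    · have : RY.card = 0 := by omega
      rw [this]; simp
  rw [hRAe] at bZ1
  set B : ℤ := (t : ℤ) + k + 1 - L with hB
  have hB0 : 0 ≤ B := by omega
  have hyg : (y : ℤ) * (RX.card + B) ≤ y * ((g : ℤ) + k + 2 - L) :=
    mul_le_mul_of_nonneg_left (by omega) (by omega)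
  have hst : 1 ≤ RY.card → s < t := by
    intro h
    have h1 := (mRY s).1 (hs0 h)
    by_contra h2
    have := mono t s (by omega) (by omega)
    omega
  have F1 : 2 * ((RY.card : ℤ) * A) + RY.card * (RY.card - 1) + 2
      ≤ RX.card * (RX.card + 1) + 2 * (KX.card * RX.card) := by linarith
  have F2 : 2 * ((RX.card : ℤ) * B) + RX.card * (RX.card - 1) + 2 * ((y : ℤ) * (RX.card + B)) + 2
      ≤ 2 * ((y : ℤ) * (1 + RY.card + KY.card)) + RY.card * (RY.card + 1)
        + 2 * (KY.card * RY.card) := by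
    have : (y : ℤ) + (RY.card * y) + KY.card * (y + RY.card)
      = (y : ℤ) * (1 + RY.card + KY.card) + (KY.card * RY.card) := by ring
    linarith
  by_cases hKY0 : KY.card = 0
  · by_cases hKX0 : KX.card = 0
    · rw [hKX0] at F1
      rw [hKY0] at F2
      refine num_a RY.card RX.card y A B (by omega) (by omega) (by omega) hRA hB0 ?_
        (by simpa using F1) (by simpa using F2)
      intro h
      have h' : 1 ≤ RY.card := by omega
      have := hA h'
      have := hst h'
      omega
    · rw [hKY0] at F2
      refine num_c RY.card RX.card y A B KX.card (by omega) (by omega) (by omega) hB0 (by omega) ?_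
        F1 (by simpa using F2)
      intro h
      have h' : 1 ≤ RY.card := by omega
      have hA' := hA h'
      have hs := (mRY s).1 (hs0 h')
      have hne : ∃ u, u ∈ KX := Finset.card_pos.1 (by omega)
      obtain ⟨u, hu⟩ := hne
      have hlt : ∀ i ∈ KX, s < i := by
        intro i hi
        rw [mKX] at hi
        by_contra h2
        have := mono i s (by omega) (by omega)
        omega
      have hsu := hlt u hu
      rw [mKX] at hu
      have hc : KX.card ≤ (Finset.Ioo s (L - k - 1).toNat).card := by
        apply Finset.card_le_card
        intro i hi
        have := hlt i hi
        rw [mKX] at hi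
        rw [Finset.mem_Ioo]
        omega
      rw [Nat.card_Ioo] at hc
      omega
  · have hne : ∃ u, u ∈ KY := Finset.card_pos.1 (by omega)
    obtain ⟨u, hu⟩ := hne
    have hlt : ∀ i ∈ KY, ∀ j, j < n → L < α j → i < j := by
      intro i hi j hj hj2
      rw [mKY] at hi
      by_contra h2
      have := mono j i (by omega) (by omega)
      omega
    have hKX0 : KX.card = 0 := by
      rw [Finset.card_eq_zero, Finset.eq_empty_iff_forall_notMem]
      intro j hj
      rw [mKX] at hj
      have := hlt u hu j hj.1 hj.2.2
      rw [mKY] at hu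
      omega
    rw [hKX0] at F1
    refine num_b RY.card RX.card y A B KY.card (by omega) (by omega) (by omega) hRA (by omega) ?_
      (by simpa using F1) F2
    have htu := hlt u hu t htn.1 (by omega)
    rw [mKY] at hu
    have hc : KY.card ≤ (Finset.Ioo (max L 0).toNat t).card := by
      apply Finset.card_le_card
      intro i hi
      have := hlt i hi t htn.1 (by omega)
      rw [mKY] at hi
      rw [Finset.mem_Ioo]
      omega
    rw [Nat.card_Ioo] at hc
    omega

end Stmt14

namespace Stmt14

lemma core_signed (n k : ℕ) (hk : 1 ≤ k) (L : ℤ) (α : ℕ → ℤ)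
    (mono : ∀ i j, i ≤ j → j ≤ n → α i ≤ α j) (per : α n = α 0 + n + k + 1) :
    (∑ i ∈ range n, max (α (i + 1) - max L ((i : ℤ) + 1 + k + 1)) 0
      ≤ ∑ i ∈ range n, max (L - max (α (i + 1)) ((i : ℤ) + 1)) 0) ∨
    (∑ i ∈ range n, max (min (i : ℤ) L - α i) 0
      ≤ ∑ i ∈ range n, max (min (α i) ((i : ℤ) + k + 1) - L) 0) := by
  by_cases h0 : α 0 ≤ 0
  · exact core_pos n k hk L α mono per h0
  · have key := core_pos n k hk ((n : ℤ) + k + 1 - L) (fun i => (n : ℤ) + k + 1 - α (n - i))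
      (fun i j hij hj => by
        have := mono (n - j) (n - i) (by omega) (by omega)
        omega)
      (by simp only [Nat.sub_self, Nat.sub_zero]; omega)
      (by simp only [Nat.sub_zero]; omega)
    rcases key with key | key
    · right
      convert key using 1
      · refine (Finset.sum_range_reflect _ n).symm.trans ?_
        apply Finset.sum_congr rfl
        intro i hi
        rw [Finset.mem_range] at hi
        have e : n - (i + 1) = n - 1 - i := by omega
        simp only [e]
        have : ((n - 1 - i : ℕ) : ℤ) = (n : ℤ) - 1 - i := by omega
        rw [this]
        omega
      · refine (Finset.sum_range_reflect _ n).symm.trans ?_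
        apply Finset.sum_congr rfl
        intro i hi
        rw [Finset.mem_range] at hi
        have e : n - (i + 1) = n - 1 - i := by omega
        simp only [e]
        have : ((n - 1 - i : ℕ) : ℤ) = (n : ℤ) - 1 - i := by omega
        rw [this]
        omega
    · left
      convert key using 1
      · refine (Finset.sum_range_reflect _ n).symm.trans ?_
        apply Finset.sum_congr rfl
        intro i hi
        rw [Finset.mem_range] at hi
        have e : n - 1 - i + 1 = n - i := by omega
        simp only [e]
        have : ((n - 1 - i : ℕ) : ℤ) = (n : ℤ) - 1 - i := by omega
        rw [this]
        omega
      · refine (Finset.sum_range_reflect _ n).symm.trans ?_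
        apply Finset.sum_congr rfl
        intro i hi
        rw [Finset.mem_range] at hi
        have e : n - 1 - i + 1 = n - i := by omega
        simp only [e]
        have : ((n - 1 - i : ℕ) : ℤ) = (n : ℤ) - 1 - i := by omega
        rw [this]
        omega

lemma core (n k : ℕ) (hk : 1 ≤ k) (L : ℤ) (α : ℕ → ℤ)
    (mono : ∀ i j, i ≤ j → j ≤ n → α i ≤ α j) (per : α n = α 0 + n + k + 1) :
    (∑ i ∈ range n, max (α (i + 1) - ((i : ℤ) + 1) - k - 1) 0
      ≤ ∑ i ∈ range n, max (L - max ((i : ℤ) + 1) (min (α (i + 1)) ((i : ℤ) + 1 + k + 1))) 0) ∨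
    (∑ i ∈ range n, max ((i : ℤ) - α i) 0
      ≤ ∑ i ∈ range n, max (max (i : ℤ) (min (α i) ((i : ℤ) + k + 1)) - L) 0) := by
  rcases core_signed n k hk L α mono per with h | h
  · left
    rw [← sub_nonpos, ← Finset.sum_sub_distrib] at h ⊢
    convert h using 1
    apply Finset.sum_congr rfl
    intro i _
    omega
  · right
    rw [← sub_nonpos, ← Finset.sum_sub_distrib] at h ⊢
    convert h using 1
    apply Finset.sum_congr rfl
    intro i _
    omega

end Stmt14

namespace Stmt14

lemma shift_sum (φ : ℕ → ℤ) (n p : ℕ) :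
    ∑ i ∈ range n, φ (p + i) = ∑ i ∈ range n, φ i + ∑ i ∈ range p, (φ (n + i) - φ i) := by
  have h1 := Finset.sum_range_add φ p n
  have h2 := Finset.sum_range_add φ n p
  rw [add_comm n p] at h2
  rw [Finset.sum_sub_distrib]
  linarith

lemma gauss (p : ℕ) : 2 * ∑ i ∈ range p, (i : ℤ) = p * (p - 1) := by
  induction p with
  | zero => simp
  | succ p ih => rw [Finset.sum_range_succ, mul_add, ih]; push_cast; ring

lemma window (n k : ℕ) (l : ℤ) (A : ℕ → ℤ) (mono : Monotone A)
    (per : ∀ i, A (i + n) = A i + n + k + 1) (c0 : ℤ)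
    (hc : c0 + ∑ i ∈ range n, A i ≤ l * (k + n) - 1) (T : ℕ) (b δ : ℕ → ℤ)
    (hb : ∀ i, b i = A (T + i) - T + 1 - i)
    (hδ : ∀ i, δ i = max 0 (min (b i) (k + 1)))
    (PE : ∑ i ∈ range n, max (b i - k - 1) 0 ≤ ∑ i ∈ range n, max (l - i - δ i) 0)
    (PF : ∑ i ∈ range n, max (- b i) 0 ≤ ∑ i ∈ range n, max (δ i - (l - i) - 1) 0) :
    ∃ T : ℕ, ∃ j : ℤ,
      2 * (∑ i ∈ range n, max (A (T + i) - T - k - i) 0) ≤ l * (l + 1) - j * (j + 1) ∧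
      2 * (c0 - (k + 1) * T) < l * (l + 1) - j * (j + 1)
        - 2 * (∑ i ∈ range n, max (A (T + i) - T - k - i) 0) + 2 * (j * k) := by
  have hmon : ∀ i j : ℕ, i ≤ j → δ i + i ≤ δ j + j := by
    intro i j hij
    have := mono (show T + i ≤ T + j by omega)
    rw [hδ, hδ, hb, hb]
    omega
  obtain ⟨p, hpn, hp⟩ : ∃ p : ℕ, p ≤ n ∧ ∀ i < n, (i < p ↔ δ i + i ≤ l) := by
    by_cases h : ∃ p, p < n ∧ l < δ p + p
    · classical
      refine ⟨Nat.find h, (Nat.find_spec h).1.le, fun i hi => ⟨fun hlt => ?_, fun hle => ?_⟩⟩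
      · have := Nat.find_min h hlt
        push Not at this
        exact this hi
      · by_contra hcon
        have h1 := (Nat.find_spec h).2
        have h2 := hmon _ i (not_lt.1 hcon)
        omega
    · push Not at h
      exact ⟨n, le_rfl, fun i hi => ⟨fun _ => h i hi, fun _ => hi⟩⟩
  have hsub : range p ⊆ range n := Finset.range_subset_range.2 hpn
  have W1 : ∑ i ∈ range n, max (l - i - δ i) 0 = ∑ i ∈ range p, (l - i - δ i) := by
    symm
    rw [← Finset.sum_subset hsub (f := fun i : ℕ => max (l - i - δ i) 0)]
    · apply Finset.sum_congr rfl
      intro i hi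
      rw [Finset.mem_range] at hi
      have := (hp i (by omega)).1 hi
      omega
    · intro i hi hi2
      rw [Finset.mem_range] at hi hi2
      have := mt (hp i hi).2 hi2
      omega
  have W2 : ∑ i ∈ range n, (max (δ i - (l - i) - 1) 0 - (δ i - (l - i) - 1))
      = ∑ i ∈ range p, (l - i - δ i + 1) := by
    symm
    rw [← Finset.sum_subset hsub
      (f := fun i : ℕ => max (δ i - (l - i) - 1) 0 - (δ i - (l - i) - 1))]
    · apply Finset.sum_congr rfl
      intro i hi
      rw [Finset.mem_range] at hi
      have := (hp i (by omega)).1 hi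
      omega
    · intro i hi hi2
      rw [Finset.mem_range] at hi hi2
      have := mt (hp i hi).2 hi2
      omega
  have he : ∑ i ∈ range n, max (A (T + p + i) - ((T + p : ℕ) : ℤ) - k - i) 0
      = ∑ i ∈ range n, max (b i - k - 1) 0 + ∑ i ∈ range p, δ i := by
    have h1 := shift_sum (fun i : ℕ => max (A (T + i) - T - k - i) 0) n p
    have h2 : ∀ i, max (A (T + i) - T - k - i) 0 = max (b i - k - 1) 0 := by
      intro i; rw [hb]; congr 1; ring
    have h3 : ∀ i : ℕ, max (A (T + (n + i)) - T - k - ((n + i : ℕ) : ℤ)) 0 = max (b i) 0 := by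
      intro i
      rw [hb, show T + (n + i) = T + i + n by ring, per]
      push_cast
      congr 1; ring
    simp only [h3] at h1
    simp only [h2] at h1
    rw [show ∑ i ∈ range p, δ i = ∑ i ∈ range p, (max (b i) 0 - max (b i - k - 1) 0) from
      Finset.sum_congr rfl (fun i _ => by rw [hδ]; omega), ← h1]
    apply Finset.sum_congr rfl
    intro i _
    rw [hb (p + i), show T + p + i = T + (p + i) by ring]
    push_cast
    congr 1; ring
  have hA : ∑ i ∈ range n, A (T + i) = ∑ i ∈ range n, A i + (n + k + 1) * T := by
    rw [shift_sum A n T]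
    congr 1
    rw [show ∑ i ∈ range T, (A (n + i) - A i) = ∑ i ∈ range T, ((n : ℤ) + k + 1) from
      Finset.sum_congr rfl (fun i _ => by rw [add_comm n i, per]; ring)]
    simp [mul_comm]
  have hbs : ∑ i ∈ range n, b i = ∑ i ∈ range n, A (T + i) - n * T + n - ∑ i ∈ range n, (i : ℤ) := by
    simp only [hb, Finset.sum_sub_distrib, Finset.sum_add_distrib]
    simp
  have hbd : ∑ i ∈ range n, b i = ∑ i ∈ range n, δ i + ∑ i ∈ range n, max (b i - k - 1) 0
      - ∑ i ∈ range n, max (- b i) 0 := by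
    rw [← Finset.sum_add_distrib, ← Finset.sum_sub_distrib]
    apply Finset.sum_congr rfl
    intro i _
    rw [hδ]; omega
  have gp := gauss p
  have gn := gauss n
  refine ⟨T + p, l - p, ?_⟩
  rw [he]
  simp only [Finset.sum_sub_distrib, Finset.sum_add_distrib, Finset.sum_const, Finset.card_range,
    nsmul_eq_mul, mul_one] at W1 W2
  push_cast
  constructor
  · linarith
  · linarith

lemma search (n k : ℕ) (hk : 1 ≤ k) (l : ℤ) (A : ℕ → ℤ) (mono : Monotone A)
    (per : ∀ i, A (i + n) = A i + n + k + 1) (h0 : ∀ i < n, A i ≤ 0) (c0 : ℤ)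
    (hc : c0 + ∑ i ∈ range n, A i ≤ l * (k + n) - 1) :
    ∃ T : ℕ, ∃ j : ℤ,
      2 * (∑ i ∈ range n, max (A (T + i) - T - k - i) 0) ≤ l * (l + 1) - j * (j + 1) ∧
      2 * (c0 - (k + 1) * T) < l * (l + 1) - j * (j + 1)
        - 2 * (∑ i ∈ range n, max (A (T + i) - T - k - i) 0) + 2 * (j * k) := by
  by_contra hcon
  set b : ℕ → ℕ → ℤ := fun T i => A (T + i) - T + 1 - i with hb
  set δ : ℕ → ℕ → ℤ := fun T i => max 0 (min (b T i) (k + 1)) with hδ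
  have hno : ∀ T, (∑ i ∈ range n, max (b T i - k - 1) 0 ≤ ∑ i ∈ range n, max (l - i - δ T i) 0) →
      ¬ (∑ i ∈ range n, max (- b T i) 0 ≤ ∑ i ∈ range n, max (δ T i - (l - i) - 1) 0) :=
    fun T PE PF => hcon (window n k l A mono per c0 hc T (b T) (δ T) (fun _ => rfl) (fun _ => rfl) PE PF)
  have hPE : ∀ T, ∑ i ∈ range n, max (b T i - k - 1) 0 ≤ ∑ i ∈ range n, max (l - i - δ T i) 0 := by
    intro T
    induction T with
    | zero =>
      apply Finset.sum_le_sum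
      intro i hi
      rw [Finset.mem_range] at hi
      have := h0 i hi
      simp only [hb, Nat.zero_add]
      push_cast
      omega
    | succ T ih =>
      have h1 := hno T ih
      rcases core n k hk (l + 1) (fun i => A (T + i) - T + 1)
        (fun i j hij _ => by have := mono (show T + i ≤ T + j by omega); omega)
        (by simp only [per, Nat.add_zero]; ring) with h | h
      · convert h using 1
        · apply Finset.sum_congr rfl
          intro i _
          simp only [hb, show T + 1 + i = T + (i + 1) by ring]
          push_cast
          congr 1; ring
        · apply Finset.sum_congr rfl
          intro i _
          simp only [hb, hδ, show T + 1 + i = T + (i + 1) by ring]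
          push_cast
          omega
      · exfalso
        apply h1
        convert h using 1
        · apply Finset.sum_congr rfl
          intro i _
          simp only [hb]
          congr 1; ring
        · apply Finset.sum_congr rfl
          intro i _
          simp only [hb, hδ]
          omega
  have hperQ : ∀ Q i : ℕ, A (n * Q + i) = A i + (n + k + 1) * Q := by
    intro Q i
    induction Q with
    | zero => simp
    | succ Q ih =>
      rw [show n * (Q + 1) + i = n * Q + i + n by ring, per, ih]
      push_cast
      ring
  set Q : ℕ := (n - A 0).toNat with hQ
  apply hno (n * Q) (hPE _)
  have hL : ∑ i ∈ range n, max (- b (n * Q) i) 0 = 0 := by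
    apply Finset.sum_eq_zero
    intro i hi
    rw [Finset.mem_range] at hi
    have h1 := mono (Nat.zero_le i)
    have h2 : (n : ℤ) - A 0 ≤ Q := by omega
    have h3 : (0 : ℤ) ≤ k * Q := by positivity
    simp only [hb, hperQ]
    push_cast
    have : 0 ≤ A i + (n + k + 1) * (Q : ℤ) - n * Q + 1 - i := by nlinarith
    omega
  rw [hL]
  exact Finset.sum_nonneg (fun i _ => le_max_right _ _)

end Stmt14

namespace Stmt14

lemma reach (n k : ℕ) (hn : 1 ≤ n) (a0 : Fin n → ℤ) :
    ∃ A : ℕ → ℤ, Monotone A ∧ (∀ i, A (i + n) = A i + n + k + 1) ∧ (∀ i < n, A i ≤ 0) ∧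
      ∃ X0 : ℤ, (∑ i ∈ range n, A i = ∑ i, a0 i + (k + 1) * X0) ∧
        ∀ T : ℕ, ∃ σ : Equiv.Perm (Fin n), ∃ x : Fin n → ℤ,
          (∀ i : Fin n, a0 (σ i) + (n + k + 1) * x (σ i) - ∑ j, x j = A (T + i) - T) ∧
          ∑ j, x j = X0 + T := by
  obtain ⟨n, rfl⟩ : ∃ n', n = n' + 1 := ⟨n - 1, by omega⟩
  set M : ℤ := ((n + 1 : ℕ) : ℤ) + k + 1 with hM
  have hM0 : 0 < M := by omega
  set N : ℤ := M + |∑ i, a0 i / M| with hN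
  set x0 : Fin (n + 1) → ℤ := fun i => - (a0 i / M) - N with hx0
  set a : Fin (n + 1) → ℤ := fun i => a0 i + M * x0 i - ∑ j, x0 j with ha
  have hX : ∑ j, x0 j = - ∑ i, a0 i / M - (n + 1) * N := by
    simp only [hx0, Finset.sum_sub_distrib, Finset.sum_neg_distrib]
    simp
  have hav : ∀ i, a i = a0 i % M + ∑ i, a0 i / M - (k + 1) * N := by
    intro i
    have := Int.emod_add_mul_ediv (a0 i) M
    simp only [ha, hX]
    simp only [hx0]
    have : a0 i = a0 i % M + M * (a0 i / M) := this.symm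
    have h2 : M = (n : ℤ) + 1 + k + 1 := by rw [hM]; push_cast; ring
    have h3 : M * (-(a0 i / M) - N) = - (M * (a0 i / M)) - (n + 1 + k + 1) * N := by
      rw [← h2]; ring
    linarith
  have hspread : ∀ i j, a i ≤ a j + M := by
    intro i j
    rw [hav, hav]
    have := Int.emod_lt_of_pos (a0 i) hM0
    have := Int.emod_nonneg (a0 j) hM0.ne'
    linarith
  have hneg : ∀ i, a i ≤ 0 := by
    intro i
    rw [hav]
    have h1 := Int.emod_lt_of_pos (a0 i) hM0
    have h2 := le_abs_self (∑ i, a0 i / M)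
    have h3 : 0 ≤ (k : ℤ) * N := by
      have : 0 ≤ N := by have := abs_nonneg (∑ i, a0 i / M); omega
      positivity
    linarith
  set s := Tuple.sort a with hs
  have hsm : Monotone (a ∘ s) := Tuple.monotone_sort a
  set A : ℕ → ℤ := fun i => a (s ⟨i % (n + 1), Nat.mod_lt _ (Nat.succ_pos n)⟩) + M * ((i / (n + 1) : ℕ) : ℤ) with hA
  have hAlt : ∀ i : Fin (n + 1), A i = a (s i) := by
    intro i
    simp only [hA, Nat.mod_eq_of_lt i.2, Nat.div_eq_of_lt i.2]
    simp
  have hAper : ∀ i, A (i + (n + 1)) = A i + ((n + 1 : ℕ) : ℤ) + k + 1 := by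
    intro i
    simp only [hA, Nat.add_mod_right, Nat.add_div_right _ (Nat.succ_pos n)]
    push_cast
    rw [hM]; push_cast; ring
  refine ⟨A, ?_, hAper, ?_, ∑ j, x0 j, ?_, ?_⟩
  · intro i j hij
    have hq : i / (n + 1) ≤ j / (n + 1) := Nat.div_le_div_right hij
    rcases hq.lt_or_eq with hlt | heq
    · simp only [hA]
      have h1 := hspread (s ⟨i % (n + 1), Nat.mod_lt _ (Nat.succ_pos n)⟩) (s ⟨j % (n + 1), Nat.mod_lt _ (Nat.succ_pos n)⟩)
      have h2 : ((i / (n + 1) : ℕ) : ℤ) + 1 ≤ ((j / (n + 1) : ℕ) : ℤ) := by exact_mod_cast hlt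
      nlinarith
    · have h1 := Nat.mod_add_div i (n + 1)
      have h2 := Nat.mod_add_div j (n + 1)
      rw [← heq] at h2
      have h3 : i % (n + 1) ≤ j % (n + 1) := by omega
      have h4 := hsm (show (⟨i % (n + 1), Nat.mod_lt _ (Nat.succ_pos n)⟩ : Fin (n + 1)) ≤ ⟨j % (n + 1), Nat.mod_lt _ (Nat.succ_pos n)⟩ from h3)
      simp only [Function.comp] at h4
      simp only [hA, heq]
      linarith
  · intro i hi
    have := hAlt ⟨i, hi⟩
    simp only at this
    rw [this]
    exact hneg _
  · rw [Finset.sum_range]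
    simp only [hAlt]
    rw [Equiv.sum_comp s a]
    simp only [ha, Finset.sum_sub_distrib, Finset.sum_add_distrib, ← Finset.mul_sum]
    simp
    rw [hM]; push_cast; ring
  · intro T
    induction T with
    | zero =>
      refine ⟨s, x0, ?_, by simp⟩
      intro i
      simp only [Nat.zero_add, hAlt]
      simp [ha]
    | succ T ih =>
      obtain ⟨σ, x, h1, h2⟩ := ih
      refine ⟨(finRotate (n + 1)).trans σ, fun j => x j + if j = σ 0 then 1 else 0, ?_, ?_⟩
      · intro i
        rw [Finset.sum_add_distrib]
        simp only [Finset.sum_ite_eq', Finset.mem_univ, if_true]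
        by_cases hi : (i : ℕ) < n
        · have e : finRotate (n + 1) i = ⟨i + 1, by omega⟩ := by
            have := finRotate_of_lt hi
            simpa using this
          have h3 := h1 ⟨i + 1, by omega⟩
          have e2 : ((finRotate (n + 1)).trans σ) i = σ ⟨i + 1, by omega⟩ := by
            rw [Equiv.trans_apply, e]
          rw [e2, if_neg]
          · simp only at h3
            rw [show T + 1 + (i : ℕ) = T + (i + 1) by ring]
            push_cast
            linarith
          · intro hcon
            have := σ.injective hcon
            have h9 := congrArg Fin.val this
            change (i : ℕ) + 1 = 0 at h9
            omega
        · have hil : i = Fin.last n := by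
            ext; simp; omega
          subst hil
          have h3 := h1 0
          have e2 : ((finRotate (n + 1)).trans σ) (Fin.last n) = σ 0 := by
            rw [Equiv.trans_apply, finRotate_last]
          rw [e2, if_pos rfl]
          simp only [Fin.val_last]
          have h4 := hAper T
          rw [show T + 1 + n = T + (n + 1) by ring, h4]
          simp only [Fin.val_zero, Nat.add_zero] at h3
          rw [mul_add, mul_one]
          have hM2 : M = (n : ℤ) + 1 + k + 1 := by rw [hM]; push_cast; ring
          push_cast at h3 ⊢
          linarith
      · rw [Finset.sum_add_distrib, h2]
        simp
        ring

end Stmt14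

namespace Stmt14

open Multigraph

section basics


def RankGe (G : Multigraph V) (D : V → ℤ) (s : ℤ) : Prop :=
  ∀ E : V → ℤ, Effective E → degree E = s → G.Winnable (fun w => D w - E w)

lemma lap_add (G : Multigraph V) (f g : V → ℤ) (w : V) :
    G.laplacian (fun u => f u + g u) w = G.laplacian f w + G.laplacian g w := by
  unfold laplacian
  rw [← Finset.sum_add_distrib]
  exact Finset.sum_congr rfl (fun u _ => by ring)

lemma lap_sub (G : Multigraph V) (f g : V → ℤ) (w : V) :
    G.laplacian (fun u => f u - g u) w = G.laplacian f w - G.laplacian g w := by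
  unfold laplacian
  rw [← Finset.sum_sub_distrib]
  exact Finset.sum_congr rfl (fun u _ => by ring)

lemma lap_smul (G : Multigraph V) (c : ℤ) (f : V → ℤ) (w : V) :
    G.laplacian (fun u => c * f u) w = c * G.laplacian f w := by
  unfold laplacian
  rw [Finset.mul_sum]
  exact Finset.sum_congr rfl (fun u _ => by ring)

lemma lap_const (G : Multigraph V) (c : ℤ) (w : V) :
    G.laplacian (fun _ => c) w = 0 := by
  unfold laplacian
  simp

lemma lap_sum (G : Multigraph V) (f : V → ℤ) : ∑ w, G.laplacian f w = 0 := by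
  unfold laplacian
  have h : ∑ w, ∑ u, (G.mult w u : ℤ) * (f w - f u)
      = - ∑ w, ∑ u, (G.mult w u : ℤ) * (f w - f u) := by
    conv_lhs => rw [Finset.sum_comm]
    rw [← Finset.sum_neg_distrib]
    apply Finset.sum_congr rfl
    intro w _
    rw [← Finset.sum_neg_distrib]
    apply Finset.sum_congr rfl
    intro u _
    rw [G.symm u w]; ring
  linarith

lemma winnable_iff (G : Multigraph V) (D : V → ℤ) :
    G.Winnable D ↔ ∃ f : V → ℤ, ∀ w, 0 ≤ D w - G.laplacian f w := by
  constructor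
  · rintro ⟨E, hE, f, rfl⟩
    exact ⟨f, fun w => hE w⟩
  · rintro ⟨f, hf⟩
    exact ⟨D - G.laplacian f, fun w => hf w, f, rfl⟩

lemma winnable_deg {G : Multigraph V} {D : V → ℤ} (h : G.Winnable D) : 0 ≤ degree D := by
  obtain ⟨f, hf⟩ := (winnable_iff G D).1 h
  have h1 : 0 ≤ ∑ w, (D w - G.laplacian f w) := Finset.sum_nonneg (fun w _ => hf w)
  rw [Finset.sum_sub_distrib, lap_sum] at h1
  unfold degree
  linarith

lemma winnable_mono {G : Multigraph V} {D D' : V → ℤ} (h : G.Winnable D) (hle : ∀ w, D w ≤ D' w) :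
    G.Winnable D' := by
  obtain ⟨f, hf⟩ := (winnable_iff G D).1 h
  exact (winnable_iff G D').2 ⟨f, fun w => by have := hf w; have := hle w; linarith⟩

lemma winnable_add_lap {G : Multigraph V} {D D' : V → ℤ} (h : G.Winnable D) (f : V → ℤ)
    (hD : ∀ w, D' w = D w + G.laplacian f w) : G.Winnable D' := by
  obtain ⟨g, hg⟩ := (winnable_iff G D).1 h
  refine (winnable_iff G D').2 ⟨fun w => g w + f w, fun w => ?_⟩
  rw [lap_add, hD]
  have := hg w
  linarith

/-- `c` chips on `v`. -/
def chip (v : V) (c : ℤ) : V → ℤ := fun w => if w = v then c else 0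

lemma deg_chip (v : V) (c : ℤ) : degree (chip v c) = c := by
  simp [degree, chip]

lemma eff_chip (v : V) {c : ℤ} (hc : 0 ≤ c) : Effective (chip v c) := by
  intro w; unfold chip; split_ifs <;> simp [hc]

lemma deg_add (D E : V → ℤ) : degree (fun w => D w + E w) = degree D + degree E :=
  Finset.sum_add_distrib

lemma deg_sub (D E : V → ℤ) : degree (fun w => D w - E w) = degree D - degree E :=
  Finset.sum_sub_distrib _ _

/-- Removing chips. -/
lemma rankGe_sub_chip {G : Multigraph V} {D : V → ℤ} (v : V) {s t : ℤ} (hst : s ≤ t)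
    (h : RankGe G D t) : RankGe G (fun w => D w - chip v (t - s) w) s := by
  intro E hE hd
  have := h (fun w => E w + chip v (t - s) w)
    (fun w => add_nonneg (hE w) (eff_chip v (by linarith) w))
    (by rw [deg_add, deg_chip, hd]; ring)
  exact winnable_mono this (fun w => by linarith)

lemma rankGe_mono {G : Multigraph V} {D D' : V → ℤ} {s : ℤ} (hle : ∀ w, D w ≤ D' w)
    (h : RankGe G D s) : RankGe G D' s := by
  intro E hE hd
  exact winnable_mono (h E hE hd) (fun w => by have := hle w; linarith)

lemma rankGe_down {G : Multigraph V} {D : V → ℤ} (v : V) {s t : ℤ} (hst : s ≤ t)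
    (h : RankGe G D t) : RankGe G D s :=
  rankGe_mono (fun w => by have := eff_chip v (sub_nonneg.2 hst) w; linarith)
    (rankGe_sub_chip v hst h)

lemma rankGe_le_deg {G : Multigraph V} {D : V → ℤ} (v : V) {s : ℤ} (hs : 0 ≤ s)
    (h : RankGe G D s) : s ≤ degree D := by
  have := winnable_deg (h (chip v s) (eff_chip v hs) (deg_chip v s))
  rw [deg_sub, deg_chip] at this
  linarith

lemma rank_set_bdd (G : Multigraph V) (D : V → ℤ) (v : V) : BddAbove {r : ℤ | RankGe G D r} := by
  refine ⟨max (degree D) 0, fun r hr => ?_⟩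
  by_cases h : 0 ≤ r
  · exact (rankGe_le_deg v h hr).trans (le_max_left _ _)
  · exact (not_le.1 h).le.trans (le_max_right _ _)

lemma rankGe_rank (G : Multigraph V) (D : V → ℤ) (v : V) : RankGe G D (G.rank D) := by
  have hne : {r : ℤ | RankGe G D r}.Nonempty := by
    refine ⟨-1, fun E hE hd => ?_⟩
    have : 0 ≤ degree E := Finset.sum_nonneg (fun w _ => hE w)
    omega
  exact Int.csSup_mem hne (rank_set_bdd G D v)

lemma le_rank {G : Multigraph V} {D : V → ℤ} (v : V) {s : ℤ} (h : RankGe G D s) : s ≤ G.rank D :=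
  le_csSup (rank_set_bdd G D v) h

lemma exists_rank_eq (G : Multigraph V) (v : V) {s : ℤ} (hs : 0 ≤ s) (N : ℕ) :
    ∀ D : V → ℤ, degree D ≤ N → RankGe G D s → ∃ D', G.rank D' = s ∧ degree D' ≤ degree D := by
  induction N with
  | zero =>
    intro D hN h
    have h2 := le_rank v h
    have h3 := rankGe_le_deg v (hs.trans h2) (rankGe_rank G D v)
    exact ⟨D, by push_cast at hN; omega, le_rfl⟩
  | succ N ih =>
    intro D hN h
    have h2 := le_rank v h
    rcases h2.eq_or_lt with h3 | h3
    · exact ⟨D, h3.symm, le_rfl⟩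
    · have h4 : RankGe G D (s + 1) := rankGe_down v (by omega) (rankGe_rank G D v)
      have h5 := rankGe_sub_chip v (by omega : s ≤ s + 1) h4
      have h6 : degree (fun w => D w - chip v (s + 1 - s) w) = degree D - 1 := by
        rw [deg_sub, deg_chip]; ring
      obtain ⟨D', h7, h8⟩ := ih _ (by rw [h6]; push_cast at hN; omega) h5
      exact ⟨D', h7, by omega⟩

lemma gon_le {G : Multigraph V} (v : V) {s : ℤ} (hs : 0 ≤ s) {D : V → ℤ} (h : RankGe G D s) :
    G.gonality s ≤ degree D := by
  obtain ⟨D', h1, h2⟩ := exists_rank_eq G v hs (degree D).toNat D (Int.self_le_toNat _) h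
  refine le_trans (csInf_le ⟨0, ?_⟩ ⟨D', h1, rfl⟩) h2
  rintro d ⟨D2, h3, rfl⟩
  have := rankGe_le_deg v (by omega) (rankGe_rank G D2 v)
  omega

lemma le_gon {G : Multigraph V} (v : V) {s : ℤ} (hs : 0 ≤ s) (B : ℤ) (hex : ∃ D, RankGe G D s)
    (h : ∀ D, RankGe G D s → B ≤ degree D) : B ≤ G.gonality s := by
  obtain ⟨D, hD⟩ := hex
  obtain ⟨D', h1, h2⟩ := exists_rank_eq G v hs (degree D).toNat D (Int.self_le_toNat _) hD
  refine le_csInf ⟨_, D', h1, rfl⟩ ?_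
  rintro d ⟨D2, h3, rfl⟩
  exact h D2 (h3 ▸ rankGe_rank G D2 v)

lemma lap_max_nonneg (G : Multigraph V) (f : V → ℤ) (w : V) (h : ∀ u, f u ≤ f w) :
    0 ≤ G.laplacian f w :=
  Finset.sum_nonneg (fun u _ => mul_nonneg (by positivity) (by have := h u; linarith))

lemma exists_edge_out (G : Multigraph V) (v : V) (hv : ∀ u, Relation.ReflTransGen G.Adj v u)
    (S : Finset V) (hvS : v ∈ S) (hS : S ≠ univ) : ∃ a ∈ S, ∃ u, u ∉ S ∧ G.Adj a u := by
  by_contra hcon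
  push Not at hcon
  apply hS
  rw [Finset.eq_univ_iff_forall]
  intro u
  have := hv u
  induction this with
  | refl => exact hvS
  | tail _ h2 ih =>
    by_contra hn
    exact hcon _ ih _ hn h2

lemma exists_f0 (G : Multigraph V) (v : V) (hv : ∀ u, Relation.ReflTransGen G.Adj v u) :
    ∃ f0 : V → ℤ, ∀ w, w ≠ v → 1 ≤ G.laplacian f0 w := by
  classical
  set P : Finset V → Prop := fun S => v ∈ S ∧ ∃ f : V → ℤ, ∃ c : ℤ, (∀ w, f w ≤ c) ∧
    (∀ w, w ∉ S → f w = c) ∧ ∀ w ∈ S, w ≠ v → 1 ≤ G.laplacian f w with hP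
  have hne : (univ.filter P).Nonempty := by
    refine ⟨{v}, ?_⟩
    simp only [Finset.mem_filter, Finset.mem_univ, true_and, hP]
    refine ⟨by simp, fun _ => 0, 0, by simp, by simp, ?_⟩
    intro w hw hwv
    exact absurd (Finset.mem_singleton.1 hw) hwv
  obtain ⟨S, hS, hmax⟩ := Finset.exists_max_image _ Finset.card hne
  simp only [Finset.mem_filter, Finset.mem_univ, true_and] at hS hmax
  obtain ⟨hvS, f, c, h1, h2, h3⟩ := hS
  by_cases hu : S = univ
  · exact ⟨f, fun w hw => h3 w (by simp [hu]) hw⟩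
  exfalso
  obtain ⟨a, haS, u, huS, hadj⟩ := exists_edge_out G v hv S hvS hu
  set M : ℤ := 1 + ∑ w, ∑ u, (G.mult w u : ℤ) with hM
  have hval : ∀ w, ∑ u, (G.mult w u : ℤ) ≤ M - 1 := by
    intro w
    have := Finset.single_le_sum (f := fun w => ∑ u, (G.mult w u : ℤ))
      (fun i _ => Finset.sum_nonneg (fun j _ => by positivity)) (Finset.mem_univ w)
    linarith
  have hM1 : 1 ≤ M := by
    have : 0 ≤ ∑ w, ∑ u, (G.mult w u : ℤ) :=
      Finset.sum_nonneg (fun _ _ => Finset.sum_nonneg (fun j _ => by positivity))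
    linarith
  set χ : V → ℤ := fun w => if w ∈ S then 0 else 1 with hχ
  have hPS : P (insert u S) := by
    refine ⟨Finset.mem_insert_of_mem hvS, fun w => M * f w + χ w, M * c + 1, ?_, ?_, ?_⟩
    · intro w
      have h4 : χ w ≤ 1 := by simp only [hχ]; split_ifs <;> simp
      have h5 : M * f w ≤ M * c := mul_le_mul_of_nonneg_left (h1 w) (by linarith)
      linarith
    · intro w hw
      have hwS : w ∉ S := fun h => hw (Finset.mem_insert_of_mem h)
      simp only [hχ, hwS, if_false, h2 w hwS]
    · intro w hw hwv
      rw [lap_add, lap_smul]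
      by_cases hwS : w ∈ S
      · have h4 := h3 w hwS hwv
        have h5 : -(M - 1) ≤ G.laplacian χ w := by
          refine le_trans (neg_le_neg (hval w)) ?_
          unfold laplacian
          rw [← Finset.sum_neg_distrib]
          apply Finset.sum_le_sum
          intro x _
          have h6 : (0 : ℤ) ≤ G.mult w x := by positivity
          have h7 : -1 ≤ χ w - χ x := by
            simp only [hχ, hwS, if_true]; split_ifs <;> simp
          nlinarith
        nlinarith
      · have hwu : w = u := by
          rcases Finset.mem_insert.1 hw with h | h
          · exact h
          · exact absurd h hwS
        subst hwu
        have h4 : 0 ≤ G.laplacian f w := lap_max_nonneg G f w (fun x => by rw [h2 w hwS]; exact h1 x)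
        have h5 : 1 ≤ G.laplacian χ w := by
          unfold laplacian
          have hnn : ∀ x ∈ univ, 0 ≤ (G.mult w x : ℤ) * (χ w - χ x) := by
            intro x _
            apply mul_nonneg (by positivity)
            simp only [hχ, hwS, if_false]; split_ifs <;> simp
          refine le_trans ?_ (Finset.single_le_sum hnn (Finset.mem_univ a))
          have h6 : χ w - χ a = 1 := by simp [hχ, hwS, haS]
          rw [h6, mul_one, G.symm w a]
          unfold Adj at hadj
          omega
        have : 0 ≤ M * G.laplacian f w := mul_nonneg (by linarith) h4
        linarith
  have := hmax _ hPS
  rw [Finset.card_insert_of_notMem huS] at this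
  omega

lemma exists_rankGe (G : Multigraph V) (v : V) (hv : ∀ u, Relation.ReflTransGen G.Adj v u)
    (s : ℤ) (hs : 0 ≤ s) : ∃ D, RankGe G D s := by
  obtain ⟨f0, hf⟩ := exists_f0 G v hv
  refine ⟨chip v (s + s * |G.laplacian f0 v|), fun E hE hd => ?_⟩
  rw [winnable_iff]
  refine ⟨fun w => (-s) * f0 w, fun w => ?_⟩
  rw [lap_smul]
  have hEw : E w ≤ s := by
    rw [← hd]
    exact Finset.single_le_sum (fun x _ => hE x) (Finset.mem_univ w)
  by_cases hw : w = v
  · subst hw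
    simp only [chip, if_true]
    have := neg_abs_le (G.laplacian f0 w)
    nlinarith
  · simp only [chip, hw, if_false]
    have := hf w hw
    nlinarith

end basics

end Stmt14

namespace Stmt14

open Multigraph

section rr


noncomputable def ordν (G : Multigraph V) : V → ℤ := fun w =>
  ∑ u, (if Fintype.equivFin V u < Fintype.equivFin V w then (G.mult w u : ℤ) else 0) - 1

lemma ordν_not_winnable [Nonempty V] (G : Multigraph V) : ¬ G.Winnable (ordν G) := by
  rw [winnable_iff]
  rintro ⟨f, hf⟩
  obtain ⟨w0, _, hw0⟩ := Finset.exists_max_image univ f Finset.univ_nonempty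
  obtain ⟨w, hw, hmin⟩ := Finset.exists_min_image (univ.filter (fun w => f w = f w0))
    (Fintype.equivFin V) ⟨w0, by simp⟩
  simp only [Finset.mem_filter, Finset.mem_univ, true_and] at hw hmin
  have h := hf w
  have hle : ∑ u, (if Fintype.equivFin V u < Fintype.equivFin V w then (G.mult w u : ℤ) else 0)
      ≤ G.laplacian f w := by
    apply Finset.sum_le_sum
    intro u _
    have hu := hw0 u (Finset.mem_univ u)
    have hm : (0 : ℤ) ≤ G.mult w u := by positivity
    split_ifs with hlt
    · have hne : f u ≠ f w0 := fun he => absurd hlt (not_lt.2 (hmin u he))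
      have : 1 ≤ f w - f u := by omega
      nlinarith
    · apply mul_nonneg hm; omega
  unfold ordν at h
  linarith

lemma sum_ord (G : Multigraph V) :
    2 * ∑ w, ∑ u, (if Fintype.equivFin V u < Fintype.equivFin V w then (G.mult w u : ℤ) else 0)
      = ∑ w, ∑ u, (G.mult w u : ℤ) := by
  have h : ∑ w, ∑ u, (if Fintype.equivFin V u < Fintype.equivFin V w then (G.mult w u : ℤ) else 0)
      = ∑ w, ∑ u, (if Fintype.equivFin V w < Fintype.equivFin V u then (G.mult w u : ℤ) else 0) := by
    rw [Finset.sum_comm]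
    refine Finset.sum_congr rfl (fun w _ => Finset.sum_congr rfl (fun u _ => ?_))
    rw [G.symm]
  rw [two_mul]
  nth_rewrite 2 [h]
  rw [← Finset.sum_add_distrib]
  refine Finset.sum_congr rfl (fun w _ => ?_)
  rw [← Finset.sum_add_distrib]
  refine Finset.sum_congr rfl (fun u _ => ?_)
  rcases lt_trichotomy (Fintype.equivFin V u) (Fintype.equivFin V w) with hh | hh | hh
  · simp [hh, hh.le.not_gt]
  · have := (Fintype.equivFin V).injective hh
    subst this
    simp [G.loopless]
  · simp [hh, hh.le.not_gt]

lemma two_genus (G : Multigraph V) :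
    2 * G.genus = ∑ w, ∑ u, (G.mult w u : ℤ) - 2 * Fintype.card V + 2 := by
  have h := sum_ord G
  unfold genus
  push_cast
  omega

lemma deg_ordν (G : Multigraph V) : degree (ordν G) = G.genus - 1 := by
  have h := sum_ord G
  have h2 := two_genus G
  unfold degree ordν
  rw [Finset.sum_sub_distrib]
  simp only [Finset.sum_const, Finset.card_univ, nsmul_eq_mul, mul_one]
  omega

lemma winnable_of_deg (G : Multigraph V) (v : V) (hv : ∀ u, Relation.ReflTransGen G.Adj v u)
    (D : V → ℤ) (hD : G.genus ≤ degree D) : G.Winnable D := by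
  classical
  obtain ⟨f1, hf1⟩ := exists_f0 G v hv
  set f0 : V → ℤ := fun w => f1 w - f1 v with hf0d
  have hf0v : f0 v = 0 := by simp [hf0d]
  have hf0 : ∀ w, w ≠ v → 1 ≤ G.laplacian f0 w := by
    intro w hw
    rw [hf0d, lap_sub G f1 (fun _ => f1 v), lap_const]
    have := hf1 w hw
    linarith
  set c : ℤ := ∑ w, |D w| + 1 with hc
  have hDc : ∀ w, |D w| + 1 ≤ c := by
    intro w
    have := Finset.single_le_sum (f := fun w => |D w|) (fun i _ => abs_nonneg _) (Finset.mem_univ w)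
    simp only [hc]
    linarith
  have hc0 : 0 ≤ c := by have := hDc v; have := abs_nonneg (D v); linarith
  set P : ℤ → Prop := fun s => ∃ f : V → ℤ, f v = 0 ∧ (∀ w, w ≠ v → 0 ≤ D w - G.laplacian f w) ∧
    ∑ w, f w = s with hP
  have hbdd : ∀ s, P s → s ≤ ∑ w, c * f0 w := by
    rintro s ⟨f, hfv, hfw, rfl⟩
    apply Finset.sum_le_sum
    intro w _
    obtain ⟨w1, _, hw1⟩ := Finset.exists_max_image univ (fun u => f u - c * f0 u) ⟨v, Finset.mem_univ v⟩
    have hlap := lap_max_nonneg G (fun u => f u - c * f0 u) w1 (fun u => hw1 u (Finset.mem_univ u))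
    rw [lap_sub G f (fun u => c * f0 u), lap_smul] at hlap
    have hw1v : w1 = v := by
      by_contra hne
      have h1 := hfw w1 hne
      have h2 := hf0 w1 hne
      have h3 := hDc w1
      have h4 := le_abs_self (D w1)
      nlinarith
    have h5 := hw1 w (Finset.mem_univ w)
    rw [hw1v, hfv, hf0v] at h5
    linarith
  have hne : ∃ s, P s := by
    refine ⟨_, fun w => (-c) * f0 w, by simp [hf0v], ?_, rfl⟩
    intro w hw
    rw [lap_smul]
    have h2 := hf0 w hw
    have h3 := hDc w
    have h4 := neg_abs_le (D w)
    nlinarith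
  obtain ⟨s, ⟨f, hfv, hfw, hfs⟩, hmax⟩ := Int.exists_greatest_of_bdd ⟨_, hbdd⟩ hne
  set D' : V → ℤ := fun w => D w - G.laplacian f w with hD'
  have hdeg : degree D' = degree D := by
    rw [hD', deg_sub]
    have := lap_sum G f
    unfold degree
    linarith
  by_cases hv0 : 0 ≤ D' v
  · rw [winnable_iff]
    refine ⟨f, fun w => ?_⟩
    by_cases hw : w = v
    · rw [hw]; exact hv0
    · exact hfw w hw
  exfalso
  have hburn : ∀ S : Finset V, v ∈ S → S ≠ univ → ∃ w, w ∉ S ∧ D' w + 1 ≤ ∑ u ∈ S, (G.mult w u : ℤ) := by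
    intro S hvS hS
    by_contra hcon
    push Not at hcon
    set χ : V → ℤ := fun w => if w ∈ S then 0 else 1 with hχ
    have hPs : P (s + ∑ w, χ w) := by
      refine ⟨fun w => f w + χ w, by simp [hfv, hχ, hvS], ?_, by rw [Finset.sum_add_distrib, hfs]⟩
      intro w hw
      rw [lap_add]
      have h1 := hfw w hw
      by_cases hwS : w ∈ S
      · have h2 : G.laplacian χ w ≤ 0 := by
          apply Finset.sum_nonpos
          intro u _
          apply mul_nonpos_of_nonneg_of_nonpos (by positivity)
          simp only [hχ, hwS, if_true]; split_ifs <;> simp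
        linarith
      · have h2 : G.laplacian χ w = ∑ u ∈ S, (G.mult w u : ℤ) := by
          unfold laplacian
          rw [← Finset.sum_subset (Finset.subset_univ S)]
          · apply Finset.sum_congr rfl
            intro u hu
            simp [hχ, hwS, hu]
          · intro u _ hu
            simp [hχ, hwS, hu]
        have h3 := hcon w hwS
        rw [h2]
        simp only [hD'] at h3
        linarith
    have h4 := hmax _ hPs
    have h5 : 0 < ∑ w, χ w := by
      have : ∃ w, w ∉ S := by
        by_contra h
        push Not at h
        exact hS (Finset.eq_univ_iff_forall.2 h)
      obtain ⟨w, hw⟩ := this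
      refine Finset.sum_pos' (fun u _ => ?_) ⟨w, Finset.mem_univ w, ?_⟩
      · simp only [hχ]; split_ifs <;> simp
      · simp [hχ, hw]
    linarith
  set Q : Finset V → Prop := fun S => v ∈ S ∧
    2 * ∑ w ∈ S, D' w ≤ ∑ w ∈ S, ∑ u ∈ S, (G.mult w u : ℤ) - 2 * S.card with hQ
  have hneQ : (univ.filter Q).Nonempty := by
    refine ⟨{v}, ?_⟩
    simp only [Finset.mem_filter, Finset.mem_univ, true_and, hQ]
    refine ⟨by simp, ?_⟩
    simp [G.loopless]
    omega
  obtain ⟨S, hS, hSmax⟩ := Finset.exists_max_image _ Finset.card hneQ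
  simp only [Finset.mem_filter, Finset.mem_univ, true_and] at hS hSmax
  obtain ⟨hvS, hS2⟩ := hS
  by_cases hu : S = univ
  · rw [hu] at hS2
    have h2 := two_genus G
    have h3 : ∑ w, D' w = degree D := hdeg
    rw [h3, Finset.card_univ] at hS2
    omega
  · obtain ⟨w, hwS, hw⟩ := hburn S hvS hu
    have hQ2 : Q (insert w S) := by
      refine ⟨Finset.mem_insert_of_mem hvS, ?_⟩
      rw [Finset.card_insert_of_notMem hwS, Finset.sum_insert hwS, Finset.sum_insert hwS,
        Finset.sum_insert hwS, G.loopless]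
      have h6 : ∑ x ∈ S, ∑ u ∈ insert w S, (G.mult x u : ℤ)
          = ∑ u ∈ S, (G.mult w u : ℤ) + ∑ x ∈ S, ∑ u ∈ S, (G.mult x u : ℤ) := by
        rw [← Finset.sum_add_distrib]
        apply Finset.sum_congr rfl
        intro x _
        rw [Finset.sum_insert hwS, G.symm x w]
      rw [h6]
      push_cast
      linarith
    have := hSmax _ hQ2
    rw [Finset.card_insert_of_notMem hwS] at this
    omega

lemma rr_bound (G : Multigraph V) (v : V) (hv : ∀ u, Relation.ReflTransGen G.Adj v u)
    (D : V → ℤ) (h : RankGe G D G.genus) : 2 * G.genus ≤ degree D := by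
  by_contra hcon
  push Not at hcon
  have : Nonempty V := ⟨v⟩
  set D1 : V → ℤ := fun w => D w + chip v (2 * G.genus - 1 - degree D) w with hD1
  have h1 : RankGe G D1 G.genus := rankGe_mono (fun w => by
    have := eff_chip v (show 0 ≤ 2 * G.genus - 1 - degree D by omega) w
    simp only [hD1]; linarith) h
  have hd1 : degree D1 = 2 * G.genus - 1 := by
    rw [hD1, deg_add, deg_chip]; ring
  have hw := winnable_of_deg G v hv (fun w => D1 w - ordν G w)
    (by rw [deg_sub, hd1, deg_ordν]; omega)
  obtain ⟨f, hf⟩ := (winnable_iff G _).1 hw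
  have h2 := h1 (fun w => D1 w - ordν G w - G.laplacian f w) hf (by
    rw [deg_sub, deg_sub, hd1, deg_ordν]
    have := lap_sum G f
    unfold degree
    linarith)
  apply ordν_not_winnable G
  refine winnable_add_lap h2 (fun w => (-1) * f w) (fun w => ?_)
  rw [lap_smul]
  ring

/-- Numerical lower bound on degrees of divisors on `G'` of given rank. -/
lemma lemmaA (G : Multigraph V) (v : V) (hv : ∀ u, Relation.ReflTransGen G.Adj v u) (k : ℕ)
    (hgenus : G.genus = (Nat.choose k 2 : ℤ))
    (hgon : ∀ l : ℤ, 1 ≤ l → l ≤ (k : ℤ) - 2 →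
      l * (k : ℤ) ≤ G.gonality (l * (l + 1) / 2))
    (D : V → ℤ) (s j : ℤ) (hs : 0 ≤ s) (hj : j * (j + 1) ≤ 2 * s) (h : RankGe G D s) :
    2 * s - j * (j + 1) + 2 * (j * k) ≤ 2 * degree D := by
  have hsd := rankGe_le_deg v hs h
  have hk0 : (0 : ℤ) ≤ k := by positivity
  rcases le_or_gt j 0 with hj0 | hj0
  · have h1 : 0 ≤ (-j) * k := mul_nonneg (by omega) hk0
    have h2 : 0 ≤ j * (j + 1) := by
      rcases hj0.eq_or_lt with h | h
      · simp [h]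
      · nlinarith
    linarith
  · rcases le_or_gt j (k - 2) with hjk | hjk
    · have h1 := hgon j (by omega) hjk
      set t := j * (j + 1) / 2 with ht
      have h2 : 2 * t = j * (j + 1) := Int.mul_ediv_cancel' (Int.even_mul_succ_self j).two_dvd
      have ht0 : 0 ≤ t := by nlinarith
      have h3 := gon_le v ht0 (rankGe_sub_chip v (show t ≤ s by omega) h)
      rw [deg_sub, deg_chip] at h3
      linarith
    · have hg2 : 2 * G.genus = k * (k - 1) := by
        rw [hgenus, Nat.choose_two_right]
        have h1 : 2 * (k * (k - 1) / 2) = k * (k - 1) :=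
          Nat.mul_div_cancel' (Nat.even_mul_pred_self k).two_dvd
        rcases Nat.eq_zero_or_pos k with h0 | h0
        · simp [h0]
        · zify [h0] at h1
          push_cast [Nat.cast_sub h0]
          exact h1
      have hgs : G.genus ≤ s := by nlinarith
      have h3 := rr_bound G v hv _ (rankGe_sub_chip v hgs h)
      rw [deg_sub, deg_chip] at h3
      have h4 : 0 ≤ (j - k) * (j - k + 1) := by
        rcases le_or_gt 0 (j - k) with h | h
        · positivity
        · nlinarith
      nlinarith

end rr

end Stmt14

namespace Stmt14

open Multigraph

section final


lemma lap_inl (G' : Multigraph V) (v : V) (k n : ℕ) (f : V ⊕ Fin n → ℤ) (u : V) :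
    (attachComplete G' v k n).laplacian f (Sum.inl u)
      = G'.laplacian (fun w => f (Sum.inl w)) u
        + (if u = v then ∑ i, ((k : ℤ) + 1) * (f (Sum.inl v) - f (Sum.inr i)) else 0) := by
  unfold laplacian
  rw [Fintype.sum_sum_type]
  congr 1
  by_cases h : u = v
  · subst h; simp [attachComplete]
  · simp [attachComplete, h]

lemma lap_inr (G' : Multigraph V) (v : V) (k n : ℕ) (f : V ⊕ Fin n → ℤ) (i : Fin n) :
    (attachComplete G' v k n).laplacian f (Sum.inr i)
      = ((k : ℤ) + 1) * (f (Sum.inr i) - f (Sum.inl v))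
        + ∑ j, (f (Sum.inr i) - f (Sum.inr j)) := by
  unfold laplacian
  rw [Fintype.sum_sum_type]
  congr 1
  · rw [Finset.sum_eq_single v]
    · simp [attachComplete]
    · intro b _ hb; simp [attachComplete, hb]
    · simp
  · apply Finset.sum_congr rfl
    intro j _
    by_cases h : i = j
    · subst h; simp
    · simp [attachComplete, h]

lemma lift_win (G' : Multigraph V) (v : V) (k n : ℕ) (σ : Equiv.Perm (Fin n))
    (D2 : V ⊕ Fin n → ℤ) (hσ : ∀ i : Fin n, D2 (Sum.inr (σ i)) ≤ k + ((i : ℕ) : ℤ))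
    (h : (attachComplete G' v k n).Winnable D2) : G'.Winnable (fun u => D2 (Sum.inl u)) := by
  obtain ⟨f, hf⟩ := (winnable_iff _ _).1 h
  by_cases hall : ∀ i, f (Sum.inr i) ≤ f (Sum.inl v)
  · rw [winnable_iff]
    refine ⟨fun u => f (Sum.inl u), fun u => ?_⟩
    have h1 := hf (Sum.inl u)
    rw [lap_inl] at h1
    have h2 : 0 ≤ (if u = v then ∑ i, ((k : ℤ) + 1) * (f (Sum.inl v) - f (Sum.inr i)) else 0) := by
      split_ifs
      · apply Finset.sum_nonneg
        intro i _
        apply mul_nonneg (by positivity)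
        have := hall i
        linarith
      · exact le_rfl
    linarith
  · exfalso
    push Not at hall
    obtain ⟨i0, hi0⟩ := hall
    obtain ⟨m, _, hm⟩ := Finset.exists_max_image univ (fun i => f (Sum.inr (σ i)))
      ⟨σ.symm i0, Finset.mem_univ _⟩
    obtain ⟨p, hp, hmin⟩ := Finset.exists_min_image
      (univ.filter (fun i => f (Sum.inr (σ i)) = f (Sum.inr (σ m)))) id ⟨m, by simp⟩
    simp only [Finset.mem_filter, Finset.mem_univ, true_and, id] at hp hmin
    have hmi := hm (σ.symm i0) (Finset.mem_univ _)
    simp only [Equiv.apply_symm_apply] at hmi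
    have h1 := hf (Sum.inr (σ p))
    rw [lap_inr] at h1
    have h2 := hσ p
    have h3 : ((p : ℕ) : ℤ) ≤ ∑ j, (f (Sum.inr (σ p)) - f (Sum.inr j)) := by
      rw [← Equiv.sum_comp σ]
      calc ((p : ℕ) : ℤ) = ∑ i : Fin n, (if i < p then (1 : ℤ) else 0) := by
            rw [← Finset.sum_filter]
            simp
            rw [← Fin.card_Iio p]
            congr 2
            ext i; simp
        _ ≤ _ := by
            apply Finset.sum_le_sum
            intro i _
            have h4 := hm i (Finset.mem_univ _)
            split_ifs with hip
            · have : f (Sum.inr (σ i)) ≠ f (Sum.inr (σ m)) := fun he =>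
                absurd hip (not_lt.2 (hmin i he))
              omega
            · omega
    have h5 : ((k : ℤ) + 1) * 1 ≤ ((k : ℤ) + 1) * (f (Sum.inr (σ p)) - f (Sum.inl v)) :=
      mul_le_mul_of_nonneg_left (by omega) (by positivity)
    linarith

lemma attach_reach (G' : Multigraph V) (hG' : G'.Connected) (v : V) (k n : ℕ) :
    ∀ u, Relation.ReflTransGen (attachComplete G' v k n).Adj (Sum.inl v) u := by
  rintro (u | i)
  · induction hG'.2 v u with
    | refl => exact Relation.ReflTransGen.refl
    | tail _ h ih => exact ih.tail h
  · apply Relation.ReflTransGen.single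
    simp [Adj, attachComplete]

lemma main_bound (G' : Multigraph V) (hG' : G'.Connected)
    (k : ℕ) (hk : 1 ≤ k) (hgenus : G'.genus = (Nat.choose k 2 : ℤ)) (v : V)
    (hgon : ∀ l : ℤ, 1 ≤ l → l ≤ (k : ℤ) - 2 →
      l * (k : ℤ) ≤ G'.gonality (l * (l + 1) / 2))
    (n : ℕ) (hn : 1 ≤ n) (l r : ℤ) (hr : 2 * r = l * (l + 1)) (D : V ⊕ Fin n → ℤ)
    (hD : RankGe (attachComplete G' v k n) D r) : l * ((k : ℤ) + n) ≤ degree D := by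
  by_contra hcon
  push Not at hcon
  obtain ⟨A, mono, per, hneg, X0, hsum, hT⟩ := reach n k hn (fun i => D (Sum.inr i))
  have hdegD : degree D = ∑ u, D (Sum.inl u) + ∑ i, D (Sum.inr i) := Fintype.sum_sum_type _
  obtain ⟨T, j, h1, h2⟩ := search n k hk l A mono per hneg (∑ u, D (Sum.inl u) - (k + 1) * X0)
    (by rw [hsum]; linarith)
  obtain ⟨σ, x, hx, hxs⟩ := hT T
  set ef : Fin n → ℤ := fun i => max (A (T + i) - T - k - ((i : ℕ) : ℤ)) 0 with hef
  have hes : ∑ i ∈ range n, max (A (T + i) - T - k - (i : ℤ)) 0 = ∑ i, ef i := by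
    rw [Finset.sum_range]
  rw [hes] at h1 h2
  set e := ∑ i, ef i with he
  set s := r - e with hs
  have hjn : 0 ≤ j * (j + 1) := by
    rcases le_or_gt 0 j with h | h
    · positivity
    · nlinarith
  have hs0 : 0 ≤ s := by omega
  set D1 : V → ℤ := fun u => D (Sum.inl u) - chip v ((k + 1) * ∑ i, x i) u with hD1
  have hdeg1 : degree D1 = ∑ u, D (Sum.inl u) - (k + 1) * (X0 + T) := by
    rw [hD1, deg_sub, deg_chip, hxs]; rfl
  have hnot : ¬ RankGe G' D1 s := by
    intro hR
    have := lemmaA G' v (hG'.2 v) k hgenus hgon D1 s j hs0 (by omega) hR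
    rw [hdeg1] at this
    rw [hs] at this
    linarith
  apply hnot
  intro E' hE' hdE'
  have hwin := hD (Sum.elim E' (fun i => ef (σ.symm i))) (by
    rintro (u | i)
    · exact hE' u
    · exact le_max_right _ _) (by
    unfold degree
    rw [Fintype.sum_sum_type]
    simp only [Sum.elim_inl, Sum.elim_inr]
    rw [Equiv.sum_comp σ.symm ef]
    have : ∑ u, E' u = s := hdE'
    rw [this]; omega)
  set f : V ⊕ Fin n → ℤ := Sum.elim (fun _ => 0) x with hf
  have hwin2 := winnable_add_lap (D' := fun w => D w - Sum.elim E' (fun i => ef (σ.symm i)) w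
    + (attachComplete G' v k n).laplacian f w) hwin f (fun w => rfl)
  have hlift := lift_win G' v k n σ _ (by
    intro i
    have h3 := hx i
    simp only [Sum.elim_inr, lap_inr, Equiv.symm_apply_apply, hf, Sum.elim_inl,
      Finset.sum_sub_distrib, Finset.sum_const, Finset.card_univ, Fintype.card_fin, nsmul_eq_mul]
    have h4 : A (T + i) - T - k - ((i : ℕ) : ℤ) ≤ ef i := le_max_left _ _
    linarith) hwin2
  refine winnable_mono hlift (fun u => ?_)
  simp only [Sum.elim_inl, lap_inl, hf, hD1, lap_const, chip]
  split_ifs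
  · simp only [Sum.elim_inr, ← Finset.mul_sum, Finset.sum_sub_distrib]
    simp
    linarith
  · linarith

end final

end Stmt14

/-- Lower bound main lemma: with `G'` of genus `C(k,2)` satisfying the
gonality hypotheses at `v`, and `G` obtained by attaching `K_n` to `v` along `k+1` edges,
`gon_{l(l+1)/2}(G) ≥ l(k+n)` for every `1 ≤ l ≤ k+n-2`. -/
theorem stmt14 (G' : Multigraph V) (hG' : G'.Connected)
    (k : ℕ) (hk : 1 ≤ k) (hgenus : G'.genus = (Nat.choose k 2 : ℤ)) (v : V)
    (hgon : ∀ l : ℤ, 1 ≤ l → l ≤ (k : ℤ) - 2 →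
      l * (k : ℤ) ≤ G'.gonality (l * (l + 1) / 2))
    (hreal : ∀ r : ℤ, 1 ≤ r →
      G'.Realises r (fun w => if w = v then G'.gonality r else 0))
    (n : ℕ) (hn : 1 ≤ n) :
    ∀ l : ℤ, 1 ≤ l → l ≤ (k : ℤ) + n - 2 →
      l * ((k : ℤ) + n) ≤ (attachComplete G' v k n).gonality (l * (l + 1) / 2) := by
  intro l hl _
  have hr : 2 * (l * (l + 1) / 2) = l * (l + 1) :=
    Int.mul_ediv_cancel' (Int.even_mul_succ_self l).two_dvd
  have hr0 : 0 ≤ l * (l + 1) / 2 := by nlinarith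
  exact Stmt14.le_gon (Sum.inl v) hr0 _
    (Stmt14.exists_rankGe _ (Sum.inl v) (Stmt14.attach_reach G' hG' v k n) _ hr0)
    (fun D hD => Stmt14.main_bound G' hG' k hk hgenus v hgon n hn l _ hr D hD)
end

section
/- Let QB_m(N) be a quasi-banana graph with N = (q_1, …, q_m), and let 1 ≤ L ≤ K ≤ m. Write C_{A,B} = ∪_{i=A}^{B} C_i. Then for every 1 ≤ j ≤ q_L, the divisor u_{0,1} + Σ_{w∈C_{0,K}} w is linearly equivalent to (Σ_{i=1}^{L} q_i + 2)·u_{L,j} + Σ_{w∈C_{L+1,K}} w. -/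
open Finset

variable {V : Type*} [Fintype V] [DecidableEq V]

namespace QBProof

lemma linEquiv_trans {G : Multigraph V} {A B C : V → ℤ} (h1 : G.LinEquiv A B)
    (h2 : G.LinEquiv B C) : G.LinEquiv A C := by
  obtain ⟨f, rfl⟩ := h1
  obtain ⟨g, rfl⟩ := h2
  refine ⟨f + g, ?_⟩
  funext w
  simp only [Pi.sub_apply, Multigraph.laplacian, Pi.add_apply]
  rw [sub_sub, ← Finset.sum_add_distrib]
  congr 1
  exact Finset.sum_congr rfl fun u _ => by ring

/-- The intermediate divisors. -/
def dv (q : ℕ → ℕ) (ℓ : V → ℕ × ℕ) (K L j : ℕ) : V → ℤ :=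
  fun w => if ℓ w = (L, j) then ((∑ i ∈ Finset.Icc 1 L, q i : ℕ) : ℤ) + 2
        else if L + 1 ≤ (ℓ w).1 ∧ (ℓ w).1 ≤ K then 1 else 0

lemma card_level {G : Multigraph V} {m : ℕ} {q : ℕ → ℕ} {ℓ : V → ℕ × ℕ}
    (hQB : G.IsQBLabelling m q ℓ) (i : ℕ) (hi : 1 ≤ i) (him : i ≤ m) :
    ∑ u : V, (if (ℓ u).1 = i then (1 : ℤ) else 0) = q i := by
  obtain ⟨-, hinj, hrange, hsurj, -⟩ := hQB
  have hsz : qbSize q i = q i := by simp [qbSize]; omega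
  rw [Finset.sum_boole]
  have : (Finset.univ.filter fun u : V => (ℓ u).1 = i).card = (Finset.Icc 1 (q i)).card := by
    apply Finset.card_bij (fun u _ => (ℓ u).2)
    · intro u hu
      have := hrange u
      simp only [Finset.mem_filter, Finset.mem_univ, true_and] at hu
      rw [hu, hsz] at this
      simp; omega
    · intro u hu v hv h
      simp only [Finset.mem_filter, Finset.mem_univ, true_and] at hu hv
      exact hinj (Prod.ext (hu.trans hv.symm) h)
    · intro b hb
      rw [Finset.mem_Icc] at hb
      obtain ⟨v, hv⟩ := hsurj i b him hb.1 (by omega)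
      exact ⟨v, by simp [hv], by simp [hv]⟩
  rw [this]; simp

lemma step {G : Multigraph V} {m : ℕ} {q : ℕ → ℕ} {ℓ : V → ℕ × ℕ}
    (hQB : G.IsQBLabelling m q ℓ) (K L j : ℕ) (hLK : L + 1 ≤ K) (hK : K ≤ m)
    (hj : 1 ≤ j) (hjq : j ≤ q (L + 1)) :
    G.LinEquiv (dv q ℓ K L 1) (dv q ℓ K (L + 1) j) := by
  have hcard := card_level hQB (L + 1) (by omega) (by omega)
  obtain ⟨hpos, hinj, hrange, hsurj, hmult⟩ := hQB
  obtain ⟨a, ha⟩ := hsurj (L + 1) j (by omega) hj (by simpa [qbSize] using hjq)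
  obtain ⟨p, hp⟩ := hsurj L 1 (by omega) le_rfl (by
    unfold qbSize
    split_ifs with h
    · exact le_rfl
    · exact hpos L (by omega) (by omega))
  have hS : (∑ i ∈ Finset.Icc 1 (L + 1), q i) = (∑ i ∈ Finset.Icc 1 L, q i) + q (L + 1) :=
    Finset.sum_Icc_succ_top (by omega) q
  have hae : ∀ w, ℓ w = (L + 1, j) ↔ w = a := fun w => by rw [← ha]; exact hinj.eq_iff
  have hpe : ∀ w, ℓ w = (L, 1) ↔ w = p := fun w => by rw [← hp]; exact hinj.eq_iff
  have hap : a ≠ p := by rintro rfl; rw [ha] at hp; simp at hp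
  set f : V → ℤ := fun w => if w = a ∨ (j = 1 ∧ L + 2 ≤ (ℓ w).1) then -1 else 0 with hf
  have key : ∀ w u, (G.mult w u : ℤ) * (f w - f u) =
      -((if w = a then (if u = p then ((∑ i ∈ Finset.Icc 1 L, q i : ℕ) : ℤ) + 2 else 0)
          + (if (ℓ u).1 = L + 1 then 1 else 0) - (if u = a then 1 else 0) else 0)
        - (if u = a then (if w = p then ((∑ i ∈ Finset.Icc 1 L, q i : ℕ) : ℤ) + 2 else 0)
          + (if (ℓ w).1 = L + 1 then 1 else 0) - (if w = a then 1 else 0) else 0)) := by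
    intro w u
    by_cases hwu : w = u
    · subst hwu; simp
    rw [hmult w u hwu]
    have e1 : ∀ w, w = a ↔ (ℓ w).1 = L + 1 ∧ (ℓ w).2 = j := fun w => by
      rw [← hae, Prod.ext_iff]
    have e2 : ∀ w, w = p ↔ (ℓ w).1 = L ∧ (ℓ w).2 = 1 := fun w => by
      rw [← hpe, Prod.ext_iff]
    have e3 : ¬ ((ℓ w).1 = (ℓ u).1 ∧ (ℓ w).2 = (ℓ u).2) := fun h => hwu (hinj (Prod.ext h.1 h.2))
    simp only [hf, e1, e2]
    clear_value f
    clear hf e1 e2 hae hpe hmult hcard hS hpos hsurj hrange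
    generalize ℓ w = x at *
    generalize ℓ u = y at *
    obtain ⟨x1, x2⟩ := x
    obtain ⟨y1, y2⟩ := y
    simp only at *
    generalize hs : (fun n => ∑ i ∈ Finset.Icc 1 n, q i) = s
    have hs' : ∀ n, ∑ i ∈ Finset.Icc 1 n, q i = s n := fun n => by rw [← hs]
    simp only [hs']
    grind
  refine ⟨f, ?_⟩
  funext w
  simp only [Pi.sub_apply, Multigraph.laplacian, dv, hae, hpe]
  rw [Finset.sum_congr rfl fun u _ => key w u, Finset.sum_neg_distrib, Finset.sum_sub_distrib]
  have h1 : ∑ u : V, (if w = a then (if u = p then ((∑ i ∈ Finset.Icc 1 L, q i : ℕ) : ℤ) + 2 else 0)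
          + (if (ℓ u).1 = L + 1 then 1 else 0) - (if u = a then 1 else 0) else 0)
      = if w = a then ((∑ i ∈ Finset.Icc 1 L, q i : ℕ) : ℤ) + 2 + q (L + 1) - 1 else 0 := by
    split_ifs with h
    · rw [Finset.sum_sub_distrib, Finset.sum_add_distrib, hcard]
      simp
    · simp
  rw [h1, Finset.sum_ite_eq' Finset.univ a, hS]
  simp only [Finset.mem_univ, if_true]
  have e1 : w = a → (ℓ w).1 = L + 1 := by rintro rfl; rw [ha]
  have e2 : w = p → (ℓ w).1 = L := by rintro rfl; rw [hp]
  push_cast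
  generalize (∑ i ∈ Finset.Icc 1 L, (q i : ℤ)) = s
  clear h1 key hae hpe hmult hcard hS hpos hsurj hrange hinj ha hp
  clear_value f
  clear hf
  generalize (ℓ w).1 = x at *
  generalize (q (L + 1) : ℤ) = t
  grind

lemma main {G : Multigraph V} {m : ℕ} {q : ℕ → ℕ} {ℓ : V → ℕ × ℕ}
    (hQB : G.IsQBLabelling m q ℓ) (K : ℕ) (hK : K ≤ m) (L : ℕ) :
    ∀ j, L + 1 ≤ K → 1 ≤ j → j ≤ q (L + 1) →
      G.LinEquiv (dv q ℓ K 0 1) (dv q ℓ K (L + 1) j) := by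
  induction L with
  | zero => intro j h1 h2 h3; exact step hQB K 0 j h1 hK h2 h3
  | succ n ih =>
    intro j h1 h2 h3
    exact linEquiv_trans (ih 1 (by omega) le_rfl (hQB.1 _ (by omega) (by omega)))
      (step hQB K (n + 1) j h1 hK h2 h3)

end QBProof

/-- Chip-firing on quasi-banana graphs: for `1 ≤ L ≤ K ≤ m` and
`1 ≤ j ≤ q_L`, the divisor `u_{0,1} + ∑_{w ∈ C_{0,K}} w` is linearly equivalent to
`(∑_{i=1}^{L} q_i + 2)·u_{L,j} + ∑_{w ∈ C_{L+1,K}} w`. -/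
theorem stmt15 (G : Multigraph V) (m : ℕ) (q : ℕ → ℕ) (ℓ : V → ℕ × ℕ)
    (hQB : G.IsQBLabelling m q ℓ)
    (L K : ℕ) (hL : 1 ≤ L) (hLK : L ≤ K) (hK : K ≤ m)
    (j : ℕ) (hj : 1 ≤ j) (hjq : j ≤ q L) :
    G.LinEquiv
      (fun w => (if ℓ w = (0, 1) then 1 else 0) + (if (ℓ w).1 ≤ K then 1 else 0))
      (fun w => if ℓ w = (L, j) then ((∑ i ∈ Finset.Icc 1 L, q i : ℕ) : ℤ) + 2
        else if L + 1 ≤ (ℓ w).1 ∧ (ℓ w).1 ≤ K then 1 else 0) := by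
  obtain ⟨n, rfl⟩ : ∃ n, L = n + 1 := ⟨L - 1, by omega⟩
  have h := QBProof.main hQB K hK n j hLK hj hjq
  change G.LinEquiv _ (QBProof.dv q ℓ K (n + 1) j)
  refine Eq.mpr (congrArg (fun D => G.LinEquiv D _) ?_) h
  funext w
  have hr := hQB.2.2.1 w
  simp only [QBProof.dv, qbSize] at *
  rcases hw : ℓ w with ⟨x, y⟩
  rw [hw] at hr
  simp only [Prod.mk.injEq] at *
  by_cases hx : x = 0
  · subst hx
    have : y = 1 := by simp at hr; omega
    subst this
    simp
  · have : 1 ≤ x := by omega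
    simp [hx, this]
end

section
/- Let G = QB_m(N) be a quasi-banana graph with distinguished vertex u_{0,1}. Then the divisor u_{0,1} + Σ_{w∈V(G)} w realises the second gonality of G (i.e. it has rank 2 and degree gon_2(G)). -/
open Finset

variable {V : Type*} [Fintype V] [DecidableEq V]

namespace QBAux

open Multigraph

section general

lemma lap_add (G : Multigraph V) (f g : V → ℤ) :
    G.laplacian (f + g) = G.laplacian f + G.laplacian g := by
  funext x
  simp only [laplacian, Pi.add_apply, ← Finset.sum_add_distrib]
  exact Finset.sum_congr rfl fun u _ => by ring

lemma lap_sub (G : Multigraph V) (f g : V → ℤ) :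
    G.laplacian (f - g) = G.laplacian f - G.laplacian g := by
  funext x
  simp only [laplacian, Pi.sub_apply, ← Finset.sum_sub_distrib]
  exact Finset.sum_congr rfl fun u _ => by ring

lemma lap_zero (G : Multigraph V) : G.laplacian 0 = 0 := by
  funext x
  simp [laplacian]

lemma degree_lap (G : Multigraph V) (f : V → ℤ) : degree (G.laplacian f) = 0 := by
  have h : ∑ x, ∑ u, (G.mult x u : ℤ) * (f x - f u)
      = - ∑ x, ∑ u, (G.mult x u : ℤ) * (f x - f u) := by
    conv_rhs => rw [Finset.sum_comm]
    rw [← Finset.sum_neg_distrib]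
    refine Finset.sum_congr rfl fun x _ => ?_
    rw [← Finset.sum_neg_distrib]
    refine Finset.sum_congr rfl fun u _ => ?_
    rw [G.symm u x]; ring
  simp only [degree, laplacian]
  omega

lemma degree_sub (D E : V → ℤ) : degree (D - E) = degree D - degree E := by
  simp [degree]

lemma degree_nonneg {D : V → ℤ} (h : Effective D) : 0 ≤ degree D :=
  Finset.sum_nonneg fun v _ => h v

lemma winnable_iff (G : Multigraph V) (D : V → ℤ) :
    G.Winnable D ↔ ∃ f, Effective (D - G.laplacian f) := by
  constructor
  · rintro ⟨E, hE, f, rfl⟩; exact ⟨f, hE⟩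
  · rintro ⟨f, hf⟩; exact ⟨_, hf, f, rfl⟩

lemma win_degree_nonneg {G : Multigraph V} {D : V → ℤ} (h : G.Winnable D) :
    0 ≤ degree D := by
  obtain ⟨f, hf⟩ := (winnable_iff G D).1 h
  have := QBAux.degree_nonneg hf
  rw [degree_sub, degree_lap] at this
  omega

lemma win_mono {G : Multigraph V} {D D' : V → ℤ} (h : G.Winnable D) (hD : ∀ x, D x ≤ D' x) :
    G.Winnable D' := by
  obtain ⟨f, hf⟩ := (winnable_iff G D).1 h
  refine (winnable_iff G D').2 ⟨f, fun x => ?_⟩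
  have := hf x
  have := hD x
  simp only [Pi.sub_apply] at *
  omega

lemma win_congr {G : Multigraph V} {D D' : V → ℤ} (f : V → ℤ)
    (hD : D' = D - G.laplacian f) (h : G.Winnable D') : G.Winnable D := by
  obtain ⟨g, hg⟩ := (winnable_iff G D').1 h
  refine (winnable_iff G D).2 ⟨f + g, ?_⟩
  rw [lap_add, ← sub_sub, ← hD]; exact hg

/-- the set in the definition of rank -/
def rankSet (G : Multigraph V) (D : V → ℤ) : Set ℤ :=
  {r : ℤ | ∀ E : V → ℤ, Effective E → degree E = r → G.Winnable (fun w => D w - E w)}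

lemma degree_single (w : V) (r : ℤ) : degree (Pi.single w r) = r := by
  simp [degree]

lemma eff_single (w : V) {r : ℤ} (hr : 0 ≤ r) : Effective (Pi.single w r) := by
  intro x
  by_cases h : x = w
  · subst h; simpa
  · simp [h]

lemma rankSet_le [Nonempty V] (G : Multigraph V) (D : V → ℤ) {r : ℤ} (hr : r ∈ rankSet G D) :
    r ≤ max (degree D) 0 := by
  by_contra! hlt
  have h0 : 0 ≤ r := by omega
  obtain ⟨w⟩ := ‹Nonempty V›
  have := win_degree_nonneg (hr (Pi.single w r) (eff_single w h0) (degree_single w r))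
  have h2 := degree_sub D (Pi.single w r)
  rw [degree_single] at h2
  have h3 : degree (fun x => D x - (Pi.single w r : V → ℤ) x) = degree D - r := h2
  omega

lemma rankSet_bdd [Nonempty V] (G : Multigraph V) (D : V → ℤ) : BddAbove (rankSet G D) :=
  ⟨_, fun _ hr => rankSet_le G D hr⟩

lemma rank_mem [Nonempty V] (G : Multigraph V) (D : V → ℤ) : G.rank D ∈ rankSet G D := by
  refine Int.csSup_mem (s := rankSet G D) ⟨-1, ?_⟩ (rankSet_bdd G D)
  intro E hE h
  have := degree_nonneg hE
  omega

/-- If 2 is in the rank set of `D`, removing a chip leaves 1 in the rank set. -/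
lemma rankSet_sub (G : Multigraph V) (D : V → ℤ) (w : V) {r s : ℤ} (hs : 0 ≤ s)
    (h : r + s ∈ rankSet G D) : r ∈ rankSet G (D - Pi.single w s) := by
  intro E hE hd
  have := h (E + Pi.single w s) (fun x => add_nonneg (hE x) (eff_single w hs x))
    (by
      have : degree (E + Pi.single w s) = degree E + degree (Pi.single w s : V → ℤ) := by
        simp [degree, Finset.sum_add_distrib]
      rw [this, degree_single, hd])
  refine win_mono this fun x => ?_
  simp only [Pi.add_apply, Pi.sub_apply]
  omega

lemma rankSet_one (G : Multigraph V) [Nonempty V] (D : V → ℤ) (h : 1 ∈ rankSet G D) :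
    ∃ D₀ : V → ℤ, Effective D₀ ∧ degree D₀ = degree D ∧
      ∀ w, ∃ f, Effective (D₀ - G.laplacian f) ∧ 1 ≤ (D₀ - G.laplacian f) w := by
  have key : ∀ w, ∃ f, Effective (D - G.laplacian f) ∧ 1 ≤ (D - G.laplacian f) w := by
    intro w
    obtain ⟨f, hf⟩ := (winnable_iff G _).1
      (h (Pi.single w 1) (eff_single w (by norm_num)) (degree_single w 1))
    refine ⟨f, fun x => ?_, ?_⟩
    · have h1 := hf x
      have h2 := eff_single w (r := 1) (by norm_num) x
      simp only [Pi.sub_apply] at *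
      omega
    · have h1 := hf w
      simp only [Pi.sub_apply, Pi.single_eq_same] at *
      omega
  obtain ⟨w₀⟩ := ‹Nonempty V›
  obtain ⟨g, hg, -⟩ := key w₀
  refine ⟨_, hg, ?_, fun w => ?_⟩
  · rw [degree_sub, degree_lap]; omega
  · obtain ⟨f, hf⟩ := key w
    refine ⟨f - g, ?_⟩
    rw [lap_sub]
    have : D - G.laplacian g - (G.laplacian f - G.laplacian g) = D - G.laplacian f := by abel
    rwa [this]

/-- truncated firing scripts are legal -/
lemma eff_max (G : Multigraph V) (D f : V → ℤ) (hD : Effective D)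
    (hf : Effective (D - G.laplacian f)) (t : ℤ) :
    Effective (D - G.laplacian (fun x => max (f x) t)) := by
  intro x
  simp only [Pi.sub_apply]
  by_cases hx : t ≤ f x
  · have h1 := hf x
    simp only [Pi.sub_apply] at h1
    have : G.laplacian (fun x => max (f x) t) x ≤ G.laplacian f x := by
      refine Finset.sum_le_sum fun u _ => mul_le_mul_of_nonneg_left ?_ (by positivity)
      dsimp only
      omega
    omega
  · have h1 := hD x
    have : G.laplacian (fun x => max (f x) t) x ≤ 0 := by
      refine Finset.sum_nonpos fun u _ => mul_nonpos_of_nonneg_of_nonpos (by positivity) ?_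
      dsimp only
      omega
    omega

lemma cut_le (G : Multigraph V) (D f : V → ℤ) (hD : Effective D)
    (hf : Effective (D - G.laplacian f)) (t : ℤ) (x : V) (hx : t < f x) :
    ∑ y ∈ univ.filter (fun y => f y ≤ t), (G.mult x y : ℤ) ≤
      (D - G.laplacian (fun x => max (f x) (t + 1))) x := by
  have h1 := eff_max G D f hD hf t x
  simp only [Pi.sub_apply] at *
  have : G.laplacian (fun x => max (f x) t) x = G.laplacian (fun x => max (f x) (t + 1)) x +
      ∑ y ∈ univ.filter (fun y => f y ≤ t), (G.mult x y : ℤ) := by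
    rw [Finset.sum_filter]
    simp only [laplacian, ← Finset.sum_add_distrib]
    refine Finset.sum_congr rfl fun u _ => ?_
    split_ifs with h
    · rw [max_eq_left hx.le, max_eq_right h, max_eq_left (by omega), max_eq_right (by omega)]
      ring
    · rw [max_eq_left hx.le, max_eq_left (by omega), max_eq_left (by omega),
        max_eq_left (by omega)]
      ring
  omega

end general

section qb
variable {G : Multigraph V} {m : ℕ} {q : ℕ → ℕ} {ℓ : V → ℕ × ℕ}

/-- multiplicity of edges from level `i` to level `i+1` -/
def cc (q : ℕ → ℕ) (i : ℕ) : ℕ := (∑ k ∈ Finset.Icc 1 i, q k) + 2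

lemma cc_succ (q : ℕ → ℕ) (i : ℕ) : cc q (i + 1) = cc q i + q (i + 1) := by
  simp only [cc]
  rw [Finset.sum_Icc_succ_top (by omega)]; omega

lemma card_level (h : G.IsQBLabelling m q ℓ) {i : ℕ} (hi : i ≤ m) :
    (univ.filter fun x => (ℓ x).1 = i).card = qbSize q i := by
  obtain ⟨h1, h2, h3, h4, h5⟩ := h
  rw [← Finset.card_image_of_injective _ h2]
  have : (univ.filter fun x => (ℓ x).1 = i).image ℓ = {i} ×ˢ Finset.Icc 1 (qbSize q i) := by
    ext ⟨a, b⟩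
    simp only [mem_image, mem_filter, mem_univ, true_and, mem_product, mem_singleton, mem_Icc]
    constructor
    · rintro ⟨x, hx, hx2⟩
      have := h3 x
      rw [hx2] at this hx
      dsimp at *
      subst hx
      exact ⟨rfl, this.2⟩
    · rintro ⟨rfl, hb⟩
      obtain ⟨v, hv⟩ := h4 a b hi hb.1 hb.2
      exact ⟨v, by rw [hv], hv⟩
  rw [this]; simp

lemma card_le_level (h : G.IsQBLabelling m q ℓ) {i : ℕ} (hi : i ≤ m) :
    (univ.filter fun x => (ℓ x).1 ≤ i).card + 1 = cc q i := by
  induction i with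
  | zero =>
    have := card_level h hi
    simp only [Nat.le_zero]
    rw [this]; simp [qbSize, cc]
  | succ i ih =>
    have h1 := card_level h hi
    have h2 := ih (by omega)
    rw [cc_succ, ← h2]
    have : (univ.filter fun x => (ℓ x).1 ≤ i + 1) =
        (univ.filter fun x => (ℓ x).1 ≤ i) ∪ (univ.filter fun x => (ℓ x).1 = i + 1) := by
      ext x; simp; omega
    rw [this, card_union_of_disjoint, h1]
    · simp [qbSize]; omega
    · rw [Finset.disjoint_left]; intro x; simp; omega

lemma card_all (h : G.IsQBLabelling m q ℓ) : Fintype.card V + 1 = cc q m := by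
  rw [← card_le_level h le_rfl]
  congr 1
  rw [Finset.filter_true_of_mem, Finset.card_univ]
  intro x _
  exact (h.2.2.1 x).1

lemma mult_same (h : G.IsQBLabelling m q ℓ) {x y : V} (hxy : x ≠ y) (hl : (ℓ x).1 = (ℓ y).1) :
    G.mult x y = 1 := by
  rw [h.2.2.2.2 x y hxy, if_pos hl]

lemma mult_down (h : G.IsQBLabelling m q ℓ) {x y : V} (hl : (ℓ x).1 + 1 = (ℓ y).1)
    (h1 : (ℓ x).2 = 1) : G.mult x y = cc q (ℓ x).1 := by
  have hxy : x ≠ y := by rintro rfl; omega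
  rw [h.2.2.2.2 x y hxy, if_neg (by omega), if_pos ⟨hl, h1⟩, cc]

/-- adjacency -/
lemma adj_cases (h : G.IsQBLabelling m q ℓ) {x y : V} (hm : G.mult x y ≠ 0) :
    (ℓ x).1 = (ℓ y).1 ∨ ((ℓ x).1 + 1 = (ℓ y).1 ∧ (ℓ x).2 = 1) ∨
      ((ℓ y).1 + 1 = (ℓ x).1 ∧ (ℓ y).2 = 1) := by
  by_cases hxy : x = y
  · left; rw [hxy]
  rw [h.2.2.2.2 x y hxy] at hm
  split_ifs at hm with h1 h2 h3
  · exact .inl h1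
  · exact .inr (.inl h2)
  · exact .inr (.inr h3)
  · exact absurd rfl hm

lemma exists_first (h : G.IsQBLabelling m q ℓ) {i : ℕ} (hi : i ≤ m) :
    ∃ v, ℓ v = (i, 1) := by
  refine h.2.2.2.1 i 1 hi le_rfl ?_
  unfold qbSize
  split_ifs with h0
  · rfl
  · exact h.1 i (by omega) hi

/-- concentrated representative -/
def FF (q : ℕ → ℕ) (ℓ : V → ℕ × ℕ) (w : V) : V → ℤ := fun x =>
  if (ℓ w).1 < (ℓ x).1 then 1 else if x = w then (cc q (ℓ w).1 : ℤ) else 0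

lemma step (h : G.IsQBLabelling m q ℓ) {v w : V} (hl : (ℓ v).1 + 1 = (ℓ w).1)
    (hv : (ℓ v).2 = 1) : ∃ f, FF q ℓ w = FF q ℓ v - G.laplacian f := by
  classical
  have inj := h.2.1
  let f : V → ℤ := fun x => if x = w ∨ ((ℓ w).2 = 1 ∧ (ℓ w).1 < (ℓ x).1) then 0 else 1
  have hvw : v ≠ w := by rintro rfl; omega
  have fw : f w = 0 := by simp [f]
  refine ⟨f, ?_⟩
  suffices hs : ∀ x, G.laplacian f x = FF q ℓ v x - FF q ℓ w x by
    funext x; simp only [Pi.sub_apply, hs]; ring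
  have ext2 : ∀ x y : V, (ℓ x).1 = (ℓ y).1 → (ℓ x).2 = (ℓ y).2 → x = y :=
    fun x y h1 h2 => inj (Prod.ext h1 h2)
  intro x
  by_cases hx : x = w
  · subst hx
    have e : ∀ u, (G.mult x u : ℤ) * (f x - f u) =
        (if u = x then 1 else 0) - (if u = v then (cc q (ℓ v).1 : ℤ) else 0)
          - (if (ℓ u).1 = (ℓ x).1 then 1 else 0) := by
      intro u
      rw [fw]
      by_cases hux : u = x
      · subst hux; simp [fw, hvw.symm]
      by_cases huv : u = v
      · subst huv
        have fu : f u = 1 := by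
          simp only [f]; rw [if_neg]; push Not; exact ⟨hux, fun _ => by omega⟩
        rw [G.symm, mult_down h hl hv, fu, if_neg hux, if_pos rfl, if_neg (by omega)]; ring
      rw [if_neg hux, if_neg huv]
      by_cases hlu : (ℓ u).1 = (ℓ x).1
      · have fu : f u = 1 := by
          simp only [f]; rw [if_neg]; push Not; exact ⟨hux, fun _ => by omega⟩
        rw [mult_same h (Ne.symm hux) hlu.symm, fu, if_pos hlu]; norm_num
      · rw [if_neg hlu]
        by_cases hm : G.mult x u = 0
        · simp [hm]
        · have fu : f u = 0 := by
            rcases adj_cases h hm with h1 | ⟨h1, h2⟩ | ⟨h1, h2⟩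
            · exact absurd h1.symm hlu
            · simp only [f]; rw [if_pos]; exact .inr ⟨h2, by omega⟩
            · exact absurd (ext2 u v (by omega) (by omega)) huv
          rw [fu]; ring
    have hc := card_level h (h.2.2.1 x).1
    have hq : qbSize q (ℓ x).1 = q (ℓ x).1 := by unfold qbSize; rw [if_neg (by omega)]
    rw [hq] at hc
    have hcc := cc_succ q (ℓ v).1
    rw [hl] at hcc
    simp only [laplacian]
    rw [Finset.sum_congr rfl fun u _ => e u]
    simp only [Finset.sum_sub_distrib, Finset.sum_ite_eq', mem_univ, if_true, Finset.sum_boole, hc]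
    simp only [FF]
    rw [if_pos (by omega), if_neg (by omega), if_pos trivial, hcc]
    push_cast; ring
  · have e : ∀ u, (G.mult x u : ℤ) * (f x - f u) =
        if u = w then FF q ℓ v x - FF q ℓ w x else 0 := by
      intro u
      by_cases huw : u = w
      · subst huw
        rw [if_pos rfl, fw]
        simp only [FF]
        by_cases hxv : x = v
        · subst hxv
          have fu : f x = 1 := by
            simp only [f]; rw [if_neg]; push Not; exact ⟨hx, fun _ => by omega⟩
          rw [mult_down h hl hv, fu, if_neg (by omega), if_pos rfl, if_neg (by omega), if_neg hx]
          ring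
        rw [if_neg hxv, if_neg hx]
        by_cases hlu : (ℓ x).1 = (ℓ u).1
        · have fu : f x = 1 := by
            simp only [f]; rw [if_neg]; push Not; exact ⟨hx, fun _ => by omega⟩
          rw [mult_same h hx hlu, fu, if_pos (by omega), if_neg (by omega)]; norm_num
        · have r : ((if (ℓ v).1 < (ℓ x).1 then 1 else 0) - (if (ℓ u).1 < (ℓ x).1 then 1 else 0) : ℤ)
              = 0 := by
            split_ifs <;> omega
          rw [r]
          by_cases hm : G.mult x u = 0
          · simp [hm]
          · have fu : f x = 0 := by
              rcases adj_cases h hm with h1 | ⟨h1, h2⟩ | ⟨h1, h2⟩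
              · exact absurd h1 hlu
              · exact absurd (ext2 x v (by omega) (by omega)) hxv
              · simp only [f]; rw [if_pos]; exact .inr ⟨h2, by omega⟩
            rw [fu]; ring
      · rw [if_neg huw]
        by_cases hm : G.mult x u = 0
        · simp [hm]
        · have fu : f x = f u := by
            simp only [f]
            refine if_congr ?_ rfl rfl
            simp only [hx, huw, false_or]
            refine and_congr_right fun hw => ?_
            rcases adj_cases h hm with h1 | ⟨h1, h2⟩ | ⟨h1, h2⟩
            · omega
            · have : (ℓ x).1 ≠ (ℓ w).1 := fun e => hx (ext2 _ _ e (by omega))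
              omega
            · have : (ℓ u).1 ≠ (ℓ w).1 := fun e => huw (ext2 _ _ e (by omega))
              omega
          rw [fu]; ring
    simp only [laplacian]
    rw [Finset.sum_congr rfl fun u _ => e u]
    simp

/-- the divisor of the theorem -/
def DD (ℓ : V → ℕ × ℕ) : V → ℤ := fun w => (if ℓ w = (0, 1) then 1 else 0) + 1

lemma equiv_FF (h : G.IsQBLabelling m q ℓ) (i : ℕ) :
    ∀ w, (ℓ w).1 = i → ∃ f, FF q ℓ w = DD ℓ - G.laplacian f := by
  induction i with
  | zero =>
    intro w hw
    refine ⟨0, ?_⟩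
    rw [lap_zero, sub_zero]
    have lev0 : ∀ x, (ℓ x).1 = 0 → ℓ x = (0, 1) := by
      intro x hx
      have := h.2.2.1 x
      rw [hx] at this
      simp only [qbSize, if_true] at this
      exact Prod.ext hx (by dsimp; omega)
    funext x
    simp only [FF, DD, hw]
    by_cases hx : (ℓ x).1 = 0
    · have : x = w := h.2.1 ((lev0 x hx).trans (lev0 w hw).symm)
      subst this
      rw [if_neg (by omega), if_pos rfl, if_pos (lev0 x hx)]
      simp [cc]
    · rw [if_pos (by omega), if_neg (fun e => hx (by rw [e]))]; rfl
  | succ i ih =>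
    intro w hw
    have := (h.2.2.1 w).1
    obtain ⟨v, hv⟩ := exists_first h (i := i) (by omega)
    obtain ⟨f, hf⟩ := ih v (by rw [hv])
    obtain ⟨g, hg⟩ := step h (v := v) (w := w) (by rw [hv, hw]) (by rw [hv])
    refine ⟨f + g, ?_⟩
    rw [hg, hf, lap_add, sub_sub]

lemma two_mem (h : G.IsQBLabelling m q ℓ) : 2 ∈ rankSet G (DD ℓ) := by
  intro E hE hd
  by_cases hall : ∀ x, E x ≤ 1
  · refine (winnable_iff G _).2 ⟨0, fun x => ?_⟩
    rw [lap_zero, sub_zero]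
    have := hall x
    simp only [DD]
    split_ifs <;> omega
  · push Not at hall
    obtain ⟨w, hw⟩ := hall
    have hEle : ∀ x, E x ≤ if x = w then 2 else 0 := by
      intro x
      have h1 : E w ≤ 2 := by
        rw [← hd]
        exact Finset.single_le_sum (fun v _ => hE v) (mem_univ w)
      split_ifs with hx
      · rw [hx]; exact h1
      · have h2 : E w + E x ≤ 2 := by
          rw [← hd, ← Finset.sum_pair (Ne.symm hx)]
          exact Finset.sum_le_sum_of_subset_of_nonneg (Finset.subset_univ _) fun v _ _ => hE v
        omega
    obtain ⟨f, hf⟩ := equiv_FF h _ w rfl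
    refine (winnable_iff G _).2 ⟨f, fun x => ?_⟩
    have h1 := congrFun hf x
    have h2 := hEle x
    simp only [Pi.sub_apply] at *
    have h3 : E x ≤ FF q ℓ w x := by
      refine h2.trans ?_
      simp only [FF]
      by_cases hx : x = w
      · subst hx
        simp [cc]
        positivity
      · rw [if_neg hx, if_neg hx]; split_ifs <;> norm_num
    omega

/-- the cut bound -/
lemma cut_bound (h : G.IsQBLabelling m q ℓ) {v w : V} (hl : (ℓ v).1 + 1 = (ℓ w).1)
    (hv : (ℓ v).2 = 1) (U : Finset V) (hU : ¬ (v ∈ U ↔ w ∈ U)) :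
    cc q (ℓ w).1 ≤ (∑ x ∈ U.filter (fun x => (ℓ x).1 ≤ (ℓ w).1), ∑ y ∈ Uᶜ, G.mult x y) + 1 := by
  classical
  let A := U.filter fun x => (ℓ x).1 = (ℓ w).1
  let B := Uᶜ.filter fun x => (ℓ x).1 = (ℓ w).1
  have hAB : A.card + B.card = q (ℓ w).1 := by
    have hc := card_level h (h.2.2.1 w).1
    have hq : qbSize q (ℓ w).1 = q (ℓ w).1 := by unfold qbSize; rw [if_neg (by omega)]
    rw [← hq, ← hc, ← card_union_of_disjoint]
    · congr 1
      ext x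
      simp only [A, B, mem_union, mem_filter, mem_compl, mem_univ, true_and]
      tauto
    · rw [Finset.disjoint_left]; intro x; simp only [A, B, mem_filter, mem_compl]; tauto
  have hcc := cc_succ q (ℓ v).1
  rw [hl] at hcc
  have hc2 : 2 ≤ cc q (ℓ v).1 := by simp [cc]
  have hAm : ∀ x ∈ A, ∀ y ∈ B, G.mult x y = 1 := by
    intro x hx y hy
    simp only [A, B, mem_filter, mem_compl] at hx hy
    exact mult_same h (by rintro rfl; exact hy.1 hx.1) (by omega)
  have hAB1 : ∀ x ∈ A, ∑ y ∈ B, G.mult x y = B.card := by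
    intro x hx
    rw [Finset.sum_congr rfl (hAm x hx)]; simp
  have hBsub : B ⊆ Uᶜ := Finset.filter_subset _ _
  have hAsub : A ⊆ U.filter (fun x => (ℓ x).1 ≤ (ℓ w).1) := by
    intro x; simp only [A, mem_filter]; rintro ⟨h1, h2⟩; exact ⟨h1, h2.le⟩
  by_cases hvU : v ∈ U
  · have hwB : w ∈ B := by simp only [B, mem_filter, mem_compl]; tauto
    have hBpos : 1 ≤ B.card := Finset.card_pos.2 ⟨w, hwB⟩
    have hvA : v ∉ A := by simp only [A, mem_filter]; omega
    have e1 : ∑ y ∈ B, G.mult v y = B.card * cc q (ℓ v).1 := by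
      rw [Finset.sum_congr rfl (g := fun _ => cc q (ℓ v).1)]
      · simp
      · intro y hy
        simp only [B, mem_filter] at hy
        exact mult_down h (by omega) hv
    have e2 : ∑ x ∈ insert v A, ∑ y ∈ B, G.mult x y ≤
        ∑ x ∈ U.filter (fun x => (ℓ x).1 ≤ (ℓ w).1), ∑ y ∈ Uᶜ, G.mult x y := by
      refine (Finset.sum_le_sum fun x _ => Finset.sum_le_sum_of_subset hBsub).trans
        (Finset.sum_le_sum_of_subset ?_)
      refine Finset.insert_subset ?_ hAsub
      simp only [mem_filter]; exact ⟨hvU, by omega⟩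
    rw [Finset.sum_insert hvA, e1, Finset.sum_congr rfl hAB1, Finset.sum_const, smul_eq_mul] at e2
    nlinarith
  · have hwU : w ∈ U := by tauto
    have hwA : w ∈ A := by simp only [A, mem_filter]; exact ⟨hwU, trivial⟩
    have hApos : 1 ≤ A.card := Finset.card_pos.2 ⟨w, hwA⟩
    have hvB : v ∉ B := by simp only [B, mem_filter]; omega
    have e2 : ∑ x ∈ A, ∑ y ∈ insert v B, G.mult x y ≤
        ∑ x ∈ U.filter (fun x => (ℓ x).1 ≤ (ℓ w).1), ∑ y ∈ Uᶜ, G.mult x y := by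
      refine (Finset.sum_le_sum fun x _ => Finset.sum_le_sum_of_subset ?_).trans
        (Finset.sum_le_sum_of_subset hAsub)
      exact Finset.insert_subset (by simpa using hvU) hBsub
    have e3 : ∀ x ∈ A, ∑ y ∈ insert v B, G.mult x y = cc q (ℓ v).1 + B.card := by
      intro x hx
      rw [Finset.sum_insert hvB, hAB1 x hx, G.symm, mult_down h _ hv]
      simp only [A, mem_filter] at hx
      omega
    rw [Finset.sum_congr rfl e3, Finset.sum_const, smul_eq_mul] at e2
    nlinarith

/-- Every legal script is constant along the tree of levels when the degree is small. -/
lemma legal_const (h : G.IsQBLabelling m q ℓ) (D : V → ℤ) (hD : Effective D)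
    (hdeg : degree D < Fintype.card V)
    (hw : ∀ w, ∃ f, Effective (D - G.laplacian f) ∧ 1 ≤ (D - G.laplacian f) w) (k : ℕ) :
    ∀ f, Effective (D - G.laplacian f) → ∀ v w, m < (ℓ w).1 + k → (ℓ v).1 + 1 = (ℓ w).1 →
      (ℓ v).2 = 1 → f v = f w := by
  classical
  induction k with
  | zero =>
    intro f _ v w hm
    have := (h.2.2.1 w).1
    omega
  | succ k ih =>
    intro f hf v w hm hl hv
    by_contra hne
    -- on higher levels, legal scripts have zero laplacian
    have hz : ∀ g, Effective (D - G.laplacian g) → ∀ x, (ℓ w).1 < (ℓ x).1 →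
        G.laplacian g x = 0 := by
      intro g hg x hx
      refine Finset.sum_eq_zero fun u _ => ?_
      by_cases hmu : G.mult x u = 0
      · simp [hmu]
      · have : g x = g u := by
          rcases adj_cases h hmu with h1 | ⟨h1, h2⟩ | ⟨h1, h2⟩
          · obtain ⟨p, hp⟩ := exists_first h (i := (ℓ x).1 - 1) (by
              have := (h.2.2.1 x).1
              omega)
            have a1 := ih g hg p x (by omega) (by rw [hp]; dsimp; omega) (by rw [hp])
            have a2 := ih g hg p u (by omega) (by rw [hp]; dsimp; omega) (by rw [hp])
            omega
          · exact ih g hg x u (by omega) h1 h2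
          · exact (ih g hg u x (by omega) h1 h2).symm
        rw [this]; ring
    have hD1 : ∀ x, (ℓ w).1 < (ℓ x).1 → 1 ≤ D x := by
      intro x hx
      obtain ⟨g, hg, hg1⟩ := hw x
      rw [Pi.sub_apply, hz g hg x hx] at hg1
      omega
    let t := min (f v) (f w)
    let U := univ.filter fun x => t < f x
    have hUc : univ.filter (fun y => f y ≤ t) = Uᶜ := by
      ext x; simp [U]
    have hU : ¬ (v ∈ U ↔ w ∈ U) := by
      simp only [U, mem_filter, mem_univ, true_and, t]; omega
    have hcut := cut_bound h hl hv U hU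
    let D' := D - G.laplacian (fun x => max (f x) (t + 1))
    have hD' : Effective D' := eff_max G D f hD hf (t + 1)
    have hdeg' : degree D' = degree D := by
      simp only [D']; rw [degree_sub, degree_lap]; omega
    have b1 : ((∑ x ∈ U.filter (fun x => (ℓ x).1 ≤ (ℓ w).1), ∑ y ∈ Uᶜ, G.mult x y : ℕ) : ℤ) ≤
        ∑ x ∈ univ.filter (fun x => (ℓ x).1 ≤ (ℓ w).1), D' x := by
      push_cast
      refine le_trans (Finset.sum_le_sum (g := D') fun x hx => ?_)
        (Finset.sum_le_sum_of_subset_of_nonneg ?_ fun x _ _ => hD' x)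
      · rw [← hUc]
        refine cut_le G D f hD hf t x ?_
        simp only [U, mem_filter] at hx
        exact hx.1.2
      · exact Finset.filter_subset_filter _ (Finset.subset_univ _)
    have b2 : ∑ x ∈ univ.filter (fun x => (ℓ x).1 ≤ (ℓ w).1), D' x +
        ∑ x ∈ univ.filter (fun x => ¬ (ℓ x).1 ≤ (ℓ w).1), D' x = degree D' :=
      Finset.sum_filter_add_sum_filter_not _ _ _
    have b3 : ((univ.filter (fun x => ¬ (ℓ x).1 ≤ (ℓ w).1)).card : ℤ) ≤
        ∑ x ∈ univ.filter (fun x => ¬ (ℓ x).1 ≤ (ℓ w).1), D' x := by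
      rw [Finset.card_eq_sum_ones]
      push_cast
      refine Finset.sum_le_sum fun x hx => ?_
      simp only [mem_filter, mem_univ, true_and, not_le] at hx
      simp only [D', Pi.sub_apply]
      rw [hz _ hD' x hx]
      have := hD1 x hx
      omega
    have b4 : (univ.filter (fun x => (ℓ x).1 ≤ (ℓ w).1)).card +
        (univ.filter (fun x => ¬ (ℓ x).1 ≤ (ℓ w).1)).card = Fintype.card V := by
      rw [Finset.card_filter_add_card_filter_not, Finset.card_univ]
    have b5 := card_le_level h (h.2.2.1 w).1
    omega

lemma gon_one (h : G.IsQBLabelling m q ℓ) (D : V → ℤ) (hD : Effective D)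
    (hw : ∀ w, ∃ f, Effective (D - G.laplacian f) ∧ 1 ≤ (D - G.laplacian f) w) :
    (Fintype.card V : ℤ) ≤ degree D := by
  by_contra! hdeg
  have hc := legal_const h D hD hdeg hw (m + 1)
  have hD1 : ∀ x, 1 ≤ D x := by
    intro x
    obtain ⟨g, hg, hg1⟩ := hw x
    have : G.laplacian g x = 0 := by
      refine Finset.sum_eq_zero fun u _ => ?_
      by_cases hmu : G.mult x u = 0
      · simp [hmu]
      · have : g x = g u := by
          rcases adj_cases h hmu with h1 | ⟨h1, h2⟩ | ⟨h1, h2⟩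
          · by_cases h0 : (ℓ x).1 = 0
            · have hx := h.2.2.1 x
              have hu := h.2.2.1 u
              rw [← h1] at hu
              rw [h0] at hx hu
              simp only [qbSize, if_true] at hx hu
              rw [h.2.1 (Prod.ext h1 (by omega) : ℓ x = ℓ u)]
            · obtain ⟨p, hp⟩ := exists_first h (i := (ℓ x).1 - 1) (by
                have := (h.2.2.1 x).1
                omega)
              have a1 := hc g hg p x (by omega) (by rw [hp]; dsimp; omega) (by rw [hp])
              have a2 := hc g hg p u (by omega) (by rw [hp]; dsimp; omega) (by rw [hp])
              omega
          · exact hc g hg x u (by omega) h1 h2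
          · exact (hc g hg u x (by omega) h1 h2).symm
        rw [this]; ring
    rw [Pi.sub_apply, this] at hg1
    omega
  have : ∑ _x : V, (1 : ℤ) ≤ degree D := Finset.sum_le_sum fun x _ => hD1 x
  simp at this
  omega

lemma lower (h : G.IsQBLabelling m q ℓ) (D : V → ℤ) {s : ℤ} (hs : 0 ≤ s)
    (hr : 1 + s ∈ rankSet G D) : (Fintype.card V : ℤ) + s ≤ degree D := by
  obtain ⟨v, -⟩ := exists_first h (Nat.zero_le m)
  have : Nonempty V := ⟨v⟩
  obtain ⟨D₀, h1, h2, h3⟩ := rankSet_one G _ (rankSet_sub G D v hs hr)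
  have := gon_one h D₀ h1 h3
  rw [h2, degree_sub, degree_single] at this
  omega

lemma degree_DD (h : G.IsQBLabelling m q ℓ) : degree (DD ℓ) = Fintype.card V + 1 := by
  obtain ⟨v, hv⟩ := exists_first h (Nat.zero_le m)
  have : ∀ x, (ℓ x = (0, 1)) ↔ x = v := fun x => by rw [← hv]; exact h.2.1.eq_iff
  simp only [degree, DD, this, Finset.sum_add_distrib]
  simp
  ring

end qb

end QBAux

/-- For a quasi-banana graph `G = QB_m(N)`, the divisor
`u_{0,1} + ∑_{w ∈ V(G)} w` realises the second gonality. -/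
theorem stmt16 (G : Multigraph V) (m : ℕ) (q : ℕ → ℕ) (ℓ : V → ℕ × ℕ)
    (hQB : G.IsQBLabelling m q ℓ) :
    G.Realises 2 (fun w => (if ℓ w = (0, 1) then 1 else 0) + 1) := by
  change G.Realises 2 (QBAux.DD ℓ)
  obtain ⟨v, -⟩ := QBAux.exists_first hQB (Nat.zero_le m)
  have : Nonempty V := ⟨v⟩
  have hrank : G.rank (QBAux.DD ℓ) = 2 := by
    have h1 : 2 ≤ G.rank (QBAux.DD ℓ) :=
      le_csSup (QBAux.rankSet_bdd G _) (QBAux.two_mem hQB)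
    have h2 := QBAux.rank_mem G (QBAux.DD ℓ)
    have h3 := QBAux.lower hQB (QBAux.DD ℓ) (s := G.rank (QBAux.DD ℓ) - 1) (by omega)
      (by rwa [add_sub_cancel])
    rw [QBAux.degree_DD hQB] at h3
    omega
  refine ⟨hrank, ?_⟩
  have hlow : ∀ d ∈ {d : ℤ | ∃ D : V → ℤ, G.rank D = 2 ∧ Multigraph.degree D = d},
      Multigraph.degree (QBAux.DD ℓ) ≤ d := by
    rintro d ⟨D, hD, rfl⟩
    have h2 := QBAux.rank_mem G D
    rw [hD] at h2
    rw [QBAux.degree_DD hQB]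
    exact QBAux.lower hQB D (s := 1) (by norm_num) h2
  have hleast : IsLeast {d : ℤ | ∃ D : V → ℤ, G.rank D = 2 ∧ Multigraph.degree D = d}
      (Multigraph.degree (QBAux.DD ℓ)) := ⟨⟨_, hrank, rfl⟩, hlow⟩
  exact hleast.csInf_eq.symm
end

section
/- Let k ≥ 1 and n ≥ 1 be integers, let G' be a graph with a vertex v such that for every integer r ≥ 1 the divisor gon_r(G')·v realises the r-th gonality of G', and let G be the graph obtained from G' by attaching a complete graph K_n: add n new vertices pairwise joined by exactly one edge, and join v to each of the n new vertices by exactly k+1 edges. Let D be an effective v-reduced divisor on G, and set D' = deg(D|_{G'})·v + D|_{K_n}. Then the rank of D on G is at most the rank of D' on G (and D and D' have the same degree). -/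
open Finset

variable {V : Type*} [Fintype V] [DecidableEq V]

namespace Multigraph

/-- Winnability, unfolded. -/
theorem winnable_iff' {W : Type*} [Fintype W] [DecidableEq W] (G : Multigraph W) (D : W → ℤ) :
    G.Winnable D ↔ ∃ f : W → ℤ, ∀ w, G.laplacian f w ≤ D w := by
  constructor
  · rintro ⟨E, hE, f, rfl⟩
    refine ⟨f, fun w => ?_⟩
    have := hE w
    simp only [Pi.sub_apply] at this
    linarith
  · rintro ⟨f, hf⟩
    refine ⟨D - G.laplacian f, fun w => ?_, f, rfl⟩
    have := hf w
    simp only [Pi.sub_apply]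
    linarith

theorem sum_laplacian {W : Type*} [Fintype W] [DecidableEq W] (G : Multigraph W) (f : W → ℤ) :
    ∑ w, G.laplacian f w = 0 := by
  have h : ∑ w, G.laplacian f w = - ∑ w, G.laplacian f w := by
    conv_lhs => unfold laplacian
    rw [Finset.sum_comm, ← Finset.sum_neg_distrib]
    refine Finset.sum_congr rfl fun w _ => ?_
    unfold laplacian
    rw [← Finset.sum_neg_distrib]
    refine Finset.sum_congr rfl fun u _ => ?_
    rw [G.symm u w]
    ring
  linarith

theorem Winnable.degree_nonneg {W : Type*} [Fintype W] [DecidableEq W] {G : Multigraph W}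
    {D : W → ℤ} (h : G.Winnable D) : 0 ≤ degree D := by
  obtain ⟨f, hf⟩ := (winnable_iff' G D).1 h
  rw [← sum_laplacian G f]
  exact Finset.sum_le_sum fun w _ => hf w

theorem Winnable.mono {W : Type*} [Fintype W] [DecidableEq W] {G : Multigraph W}
    {D D' : W → ℤ} (h : G.Winnable D) (hle : ∀ w, D w ≤ D' w) : G.Winnable D' := by
  obtain ⟨f, hf⟩ := (winnable_iff' G D).1 h
  exact (winnable_iff' G D').2 ⟨f, fun w => (hf w).trans (hle w)⟩

/-- The set whose supremum is the rank. -/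
def rankSet {W : Type*} [Fintype W] [DecidableEq W] (G : Multigraph W) (D : W → ℤ) : Set ℤ :=
  {r : ℤ | ∀ E : W → ℤ, Effective E → degree E = r → G.Winnable (fun w => D w - E w)}

theorem neg_mem_rankSet {W : Type*} [Fintype W] [DecidableEq W] (G : Multigraph W) (D : W → ℤ)
    {r : ℤ} (hr : r < 0) : r ∈ G.rankSet D := by
  intro E hE hd
  have : 0 ≤ degree E := Finset.sum_nonneg fun w _ => hE w
  omega

theorem degree_single {W : Type*} [Fintype W] [DecidableEq W] (v : W) (r : ℤ) :
    degree (fun w => if w = v then r else 0) = r := by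
  simp [degree]

theorem rankSet_le_degree {W : Type*} [Fintype W] [DecidableEq W] (G : Multigraph W) (D : W → ℤ)
    (v : W) {r : ℤ} (hr : 0 ≤ r) (h : r ∈ G.rankSet D) : r ≤ degree D := by
  have h1 := (h (fun w => if w = v then r else 0)
    (fun w => by dsimp only; split_ifs <;> omega) (degree_single v r)).degree_nonneg
  have h2 := degree_single v r
  unfold degree at *
  rw [Finset.sum_sub_distrib] at h1
  linarith

theorem rankSet_bdd {W : Type*} [Fintype W] [DecidableEq W] (G : Multigraph W) (D : W → ℤ)
    (v : W) : BddAbove (G.rankSet D) := by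
  refine ⟨max 0 (degree D), fun r hr => ?_⟩
  rcases lt_or_ge r 0 with h | h
  · exact le_max_of_le_left h.le
  · exact le_max_of_le_right (rankSet_le_degree G D v h hr)

theorem rank_mem {W : Type*} [Fintype W] [DecidableEq W] (G : Multigraph W) (D : W → ℤ)
    (v : W) : G.rank D ∈ G.rankSet D :=
  Int.csSup_mem ⟨-1, neg_mem_rankSet G D (by norm_num)⟩ (rankSet_bdd G D v)

theorem le_rank {W : Type*} [Fintype W] [DecidableEq W] (G : Multigraph W) (D : W → ℤ)
    (v : W) {r : ℤ} (h : r ∈ G.rankSet D) : r ≤ G.rank D :=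
  le_csSup (rankSet_bdd G D v) h

theorem rankSet_down {W : Type*} [Fintype W] [DecidableEq W] (G : Multigraph W) (D : W → ℤ)
    (v : W) {r s : ℤ} (hsr : s ≤ r) (h : r ∈ G.rankSet D) : s ∈ G.rankSet D := by
  intro E hE hd
  refine (h (fun w => E w + if w = v then r - s else 0) (fun w => ?_) ?_).mono fun w => ?_
  · have := hE w
    dsimp only
    split_ifs <;> omega
  · have h2 := degree_single v (r - s)
    unfold degree at *
    rw [Finset.sum_add_distrib]
    linarith
  · split_ifs <;> omega

/-- Subtracting a chip drops the rank by at most one. -/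
theorem rankSet_sub {W : Type*} [Fintype W] [DecidableEq W] (G : Multigraph W) (D : W → ℤ)
    (v : W) {r : ℤ} (h : r + 1 ∈ G.rankSet D) :
    r ∈ G.rankSet (fun w => D w - if w = v then 1 else 0) := by
  intro E hE hd
  refine (h (fun w => E w + if w = v then 1 else 0) (fun w => ?_) ?_).mono fun w => ?_
  · have := hE w
    dsimp only
    split_ifs <;> omega
  · have h2 := degree_single v 1
    unfold degree at *
    rw [Finset.sum_add_distrib]
    linarith
  · dsimp only
    split_ifs <;> omega

theorem exists_rank_eq {W : Type*} [Fintype W] [DecidableEq W] (G : Multigraph W)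
    (v : W) {r : ℤ} (hr : 0 ≤ r) (N : ℕ) : ∀ D : W → ℤ, degree D ≤ r + N → r ∈ G.rankSet D →
      ∃ B : W → ℤ, G.rank B = r ∧ degree B ≤ degree D := by
  have key : ∀ D : W → ℤ, r ∈ G.rankSet D → ¬ G.rank D = r → r + 1 ∈ G.rankSet D := by
    intro D h hne
    have h1 := le_rank G D v h
    exact rankSet_down G D v (by omega) (rank_mem G D v)
  induction N with
  | zero =>
    intro D hd h
    by_cases hne : G.rank D = r
    · exact ⟨D, hne, le_rfl⟩
    · have := rankSet_le_degree G D v (by omega) (key D h hne)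
      push_cast at hd
      omega
  | succ N ih =>
    intro D hd h
    by_cases hne : G.rank D = r
    · exact ⟨D, hne, le_rfl⟩
    · have h3 := rankSet_sub G D v (key D h hne)
      have h4 : degree (fun w => D w - if w = v then 1 else 0) = degree D - 1 := by
        have h2 := degree_single v 1
        unfold degree at *
        rw [Finset.sum_sub_distrib]
        linarith
      obtain ⟨B, hB, hB'⟩ := ih _ (by rw [h4]; push_cast at hd; omega) h3
      exact ⟨B, hB, by omega⟩

theorem gonality_le {W : Type*} [Fintype W] [DecidableEq W] (G : Multigraph W)
    (v : W) {r : ℤ} (hr : 0 ≤ r) (D : W → ℤ) (h : r ∈ G.rankSet D) :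
    G.gonality r ≤ degree D := by
  obtain ⟨B, hB, hB'⟩ := exists_rank_eq G v hr (degree D - r).toNat D (by omega) h
  refine le_trans (csInf_le ⟨0, ?_⟩ ⟨B, hB, rfl⟩) hB'
  rintro d ⟨A, hA, rfl⟩
  have := rankSet_le_degree G A v (by omega) (rank_mem G A v)
  omega

/-- Winnability on the wedge. -/
theorem winnable_attach {V : Type*} [Fintype V] [DecidableEq V] (G' : Multigraph V) (v : V)
    (k n : ℕ) (D : V ⊕ Fin n → ℤ) :
    (attachComplete G' v k n).Winnable D ↔
      ∃ h : Fin n → ℤ, (∀ i, (k + 1 : ℤ) * h i + ∑ j, (h i - h j) ≤ D (Sum.inr i)) ∧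
        G'.Winnable (fun a => D (Sum.inl a) + if a = v then (k + 1 : ℤ) * ∑ i, h i else 0) := by
  have hr : ∀ (f : V ⊕ Fin n → ℤ) (i : Fin n),
      (attachComplete G' v k n).laplacian f (Sum.inr i) =
        (k + 1 : ℤ) * (f (Sum.inr i) - f (Sum.inl v)) +
          ∑ j, (f (Sum.inr i) - f (Sum.inr j)) := by
    intro f i
    unfold laplacian attachComplete
    rw [Fintype.sum_sum_type]
    congr 1
    · simp [ite_mul]
    · refine Finset.sum_congr rfl fun j _ => ?_
      by_cases hij : i = j
      · simp [hij]
      · simp [hij]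
  have hl : ∀ (f : V ⊕ Fin n → ℤ) (a : V),
      (attachComplete G' v k n).laplacian f (Sum.inl a) =
        G'.laplacian (fun b => f (Sum.inl b)) a -
          if a = v then (k + 1 : ℤ) * ∑ i, (f (Sum.inr i) - f (Sum.inl v)) else 0 := by
    intro f a
    unfold laplacian attachComplete
    rw [Fintype.sum_sum_type, sub_eq_add_neg]
    congr 1
    by_cases ha : a = v
    · subst ha
      simp only [if_true]
      rw [Finset.mul_sum, ← Finset.sum_neg_distrib]
      refine Finset.sum_congr rfl fun j _ => ?_
      push_cast
      ring
    · simp [ha]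
  constructor
  · intro h
    obtain ⟨f, hf⟩ := (winnable_iff' _ _).1 h
    refine ⟨fun i => f (Sum.inr i) - f (Sum.inl v), fun i => ?_,
      (winnable_iff' _ _).2 ⟨fun b => f (Sum.inl b), fun a => ?_⟩⟩
    · have := hf (Sum.inr i)
      rw [hr] at this
      simpa using this
    · have := hf (Sum.inl a)
      rw [hl] at this
      linarith
  · rintro ⟨h, h1, h2⟩
    obtain ⟨g, hg⟩ := (winnable_iff' _ _).1 h2
    refine (winnable_iff' _ _).2 ⟨Sum.elim g (fun i => h i + g v), ?_⟩
    rintro (a | i)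
    · rw [hl]
      have := hg a
      simp only [Sum.elim_inl, Sum.elim_inr, add_sub_cancel_right]
      linarith
    · rw [hr]
      have := h1 i
      simp only [Sum.elim_inl, Sum.elim_inr, add_sub_cancel_right, add_sub_add_right_eq_sub]
      linarith

end Multigraph

/-- For `G` obtained from `G'` by attaching `K_n` to `v` along `k+1`
edges (with `gon_r(G')·v` realising every gonality of `G'`), and `D` an effective
`v`-reduced divisor on `G`, the rank of `D` is at most the rank of
`D' = deg(D|_{G'})·v + D|_{K_n}`, and `D` and `D'` have the same degree. -/
theorem stmt17 (G' : Multigraph V) (hG' : G'.Connected) (v : V)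
    (k n : ℕ) (hk : 1 ≤ k) (hn : 1 ≤ n)
    (hreal : ∀ r : ℤ, 1 ≤ r →
      G'.Realises r (fun w => if w = v then G'.gonality r else 0))
    (D : V ⊕ Fin n → ℤ) (hDeff : Multigraph.Effective D)
    (hDred : (attachComplete G' v k n).Reduced (Sum.inl v) D) :
    (attachComplete G' v k n).rank D ≤
      (attachComplete G' v k n).rank
        (Sum.elim (fun a => if a = v then ∑ x : V, D (Sum.inl x) else 0)
          (fun i => D (Sum.inr i))) ∧
    Multigraph.degree D =
      Multigraph.degree
        (Sum.elim (fun a => if a = v then ∑ x : V, D (Sum.inl x) else 0)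
          (fun i => D (Sum.inr i))) := by
  set D' : V ⊕ Fin n → ℤ := Sum.elim (fun a => if a = v then ∑ x : V, D (Sum.inl x) else 0)
          (fun i => D (Sum.inr i)) with hD'
  refine ⟨?_, ?_⟩
  swap
  · simp [Multigraph.degree, hD', Fintype.sum_sum_type]
  apply Multigraph.le_rank _ _ (Sum.inl v)
  have hmem := Multigraph.rank_mem (attachComplete G' v k n) D (Sum.inl v)
  generalize (attachComplete G' v k n).rank D = r at hmem
  intro E hE hEd
  -- the feasible firing scripts on the complete graph
  set F : Set (Fin n → ℤ) := {h | ∀ i, (k + 1 : ℤ) * h i + ∑ j, (h i - h j) ≤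
    D (Sum.inr i) - E (Sum.inr i)} with hF
  set e1 : ℤ := Multigraph.degree (fun a => E (Sum.inl a)) with he1
  have he1nn : 0 ≤ e1 := Finset.sum_nonneg fun a _ => hE (Sum.inl a)
  have main : ∀ E1 : V → ℤ, Multigraph.Effective E1 → Multigraph.degree E1 = e1 →
      ∃ h ∈ F, G'.Winnable (fun a => D (Sum.inl a) - E1 a +
        if a = v then (k + 1 : ℤ) * ∑ i, h i else 0) := by
    intro E1 hE1 hd1
    have hw := hmem (Sum.elim E1 (fun i => E (Sum.inr i))) ?_ ?_
    · obtain ⟨h, h1, h2⟩ := (Multigraph.winnable_attach G' v k n _).1 hw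
      exact ⟨h, h1, h2⟩
    · rintro (a | i)
      · exact hE1 a
      · exact hE (Sum.inr i)
    · rw [← hEd]
      unfold Multigraph.degree at *
      rw [Fintype.sum_sum_type, Fintype.sum_sum_type]
      simp only [Sum.elim_inl, Sum.elim_inr]
      rw [hd1, he1]
  -- the scripts in `F` have bounded total
  have hbd : ∀ h ∈ F, ∑ i, h i ≤ max 0 (∑ i, (D (Sum.inr i) - E (Sum.inr i))) := by
    intro h hh
    have h1 : ∑ i, ((k + 1 : ℤ) * h i + ∑ j, (h i - h j)) ≤
        ∑ i, (D (Sum.inr i) - E (Sum.inr i)) := Finset.sum_le_sum fun i _ => hh i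
    have h2 : ∑ i, ∑ j, (h i - h j) = 0 := by
      simp only [Finset.sum_sub_distrib]
      rw [Finset.sum_comm]
      simp
    rw [Finset.sum_add_distrib, h2, ← Finset.mul_sum, add_zero] at h1
    rcases le_or_gt (∑ i, h i) 0 with h3 | h3
    · exact le_max_of_le_left h3
    · refine le_max_of_le_right (le_trans ?_ h1)
      have hk0 : (0 : ℤ) ≤ k := by positivity
      nlinarith
  obtain ⟨h0, hh0, -⟩ := main (fun a => E (Sum.inl a)) (fun a => hE _) rfl
  have hmax : sSup ((fun h : Fin n → ℤ => ∑ i, h i) '' F) ∈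
      (fun h : Fin n → ℤ => ∑ i, h i) '' F := by
    refine Int.csSup_mem ⟨_, h0, hh0, rfl⟩ ⟨max 0 (∑ i, (D (Sum.inr i) - E (Sum.inr i))), ?_⟩
    rintro _ ⟨h, hh, rfl⟩
    exact hbd h hh
  have hub : ∀ h ∈ F, ∑ i, h i ≤ sSup ((fun h : Fin n → ℤ => ∑ i, h i) '' F) := by
    intro h hh
    refine le_csSup ⟨max 0 (∑ i, (D (Sum.inr i) - E (Sum.inr i))), ?_⟩ ⟨h, hh, rfl⟩
    rintro _ ⟨h, hh, rfl⟩
    exact hbd h hh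
  obtain ⟨hs, hsF, hsum⟩ := hmax
  rw [← hsum] at hub
  dsimp only at hub
  set M : ℤ := (k + 1 : ℤ) * ∑ i, hs i with hM
  set A : V → ℤ := fun a => D (Sum.inl a) + if a = v then M else 0 with hA
  have hAmem : e1 ∈ G'.rankSet A := by
    intro E1 hE1 hd1
    obtain ⟨h, hh, hw⟩ := main E1 hE1 hd1
    refine hw.mono fun a => ?_
    have h1 : (k + 1 : ℤ) * ∑ i, h i ≤ M :=
      mul_le_mul_of_nonneg_left (hub h hh) (by positivity)
    simp only [hA]
    split_ifs <;> linarith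
  have hdegA : Multigraph.degree A = ∑ x, D (Sum.inl x) + M := by
    have := Multigraph.degree_single v M
    unfold Multigraph.degree at *
    rw [hA, Finset.sum_add_distrib, this]
  have hdA := Multigraph.rankSet_le_degree G' A v he1nn hAmem
  refine (Multigraph.winnable_attach G' v k n _).2 ⟨hs, hsF, ?_⟩
  -- it remains to win on `G'`
  have hfin : e1 ∈ G'.rankSet (fun a => if a = v then Multigraph.degree A else 0) := by
    rcases eq_or_lt_of_le he1nn with h0 | hpos
    · intro E1 hE1 hd1
      have hz : ∀ a, E1 a = 0 := by
        intro a
        rw [← h0] at hd1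
        exact (Finset.sum_eq_zero_iff_of_nonneg fun a _ => hE1 a).1 hd1 a (Finset.mem_univ a)
      refine (Multigraph.winnable_iff' _ _).2 ⟨fun _ => 0, fun w => ?_⟩
      rw [hz w]
      simp only [Multigraph.laplacian, sub_self, mul_zero, Finset.sum_const_zero]
      split_ifs <;> omega
    · have hg := Multigraph.gonality_le G' v he1nn A hAmem
      have h1 := Multigraph.rank_mem G' (fun w => if w = v then G'.gonality e1 else 0) v
      rw [(hreal e1 hpos).1] at h1
      intro E1 hE1 hd1
      refine (h1 E1 hE1 hd1).mono fun a => ?_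
      dsimp only
      split_ifs <;> omega
  refine (hfin (fun a => E (Sum.inl a)) (fun a => hE _) rfl).mono fun a => ?_
  simp only [hD', Sum.elim_inl, hdegA]
  split_ifs <;> omega
end
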